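/- Fix real numbers t, r with 0 < t < 1, 0 < r < 1 and r² + t² = 1. Suppose the absolutely continuous part of ν with respect to Haar measure on 𝕋 is a nonzero measure and the topological support of ν has nonempty interior. Then for ℙ⁺-almost every ω ∈ Ω⁺ the unitary operator U⁺_ω has pure point spectrum with exponentially decaying eigenfunctions; that is, the closed linear span of the eigenvectors of U⁺_ω equals all of ℓ²(ℕ₀;ℂ), and for every eigenvector ψ of U⁺_ω there exist constants C > 0 and λ > 0 such that |⟨e_k, ψ⟩| ≤ C e^{−λ k} for all k ∈ ℕ₀. -/

import Mathlib

open MeasureTheory Complex Filter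

noncomputable section

instance : Fact (0 < 2 * Real.pi) := ⟨by positivity⟩

/-- The torus `𝕋 = ℝ/2πℤ`. -/
abbrev Torus : Type := AddCircle (2 * Real.pi)

/-- `ec a = e^{ia}` for `a ∈ 𝕋`. -/
def ec (a : Torus) : ℂ := (AddCircle.toCircle a : ℂ)

/-- The topological support of a measure. -/
def measSupport (ν : Measure Torus) : Set Torus := {x | ∀ s ∈ nhds x, 0 < ν s}

/-- `ℓ²(ℕ₀;ℂ)`. -/
abbrev Hn : Type := lp (fun _ : ℕ => ℂ) 2

/-- Canonical orthonormal basis of `ℓ²(ℕ₀;ℂ)`. -/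
def en (k : ℕ) : Hn := lp.single 2 k (1 : ℂ)

/-- Matrix entries of the half-lattice operator `S⁺`: `Spent t r k j = ⟨e_k, S⁺ e_j⟩`. -/
def Spent (t r : ℝ) (k j : ℕ) : ℂ :=
  if k = 0 then
    (if j = 0 then (-r : ℝ) else if j = 1 then (r*t : ℝ) else if j = 2 then (-t^2 : ℝ) else 0)
  else if k = 1 then
    (if j = 0 then (t : ℝ) else if j = 1 then (r^2 : ℝ) else if j = 2 then (-(r*t) : ℝ) else 0)
  else if k % 2 = 0 then
    (if j + 1 = k then (r*t : ℝ) else if j = k then (r^2 : ℝ)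
     else if j = k + 1 then (r*t : ℝ) else if j = k + 2 then (-t^2 : ℝ) else 0)
  else
    (if j + 2 = k then (-t^2 : ℝ) else if j + 1 = k then (-(r*t) : ℝ)
     else if j = k then (r^2 : ℝ) else if j = k + 1 then (-(r*t) : ℝ) else 0)

/-!
The eigenvalue equation of `U⁺` is a Szegő recursion whose Verblunsky coefficients all have modulus
`|r|`. Hence the entries `⟨eₙ, (U⁺)ᵀ e₀⟩` are integrals of `zᵀ χₙ` against Bernstein–Szegő weights
`|Φ*_N|⁻²`, where `|χₙ| = |Φ*ₙ|` on the circle, and they are bounded uniformly in `T` by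
`liminf_N ∫ |Φ*ₙ| |Φ*_N|⁻²`.

At a fixed spectral parameter the Prüfer phase is a Markov chain, and the expectation of
`|Φ*ₙ| |Φ*_N|⁻²` is governed by a transfer operator: multiplication by the square root of a Poisson
kernel, composition with a Blaschke factor, and averaging over `ν`. The first two steps together are
an isometry of `L²`; the third multiplies the nonconstant Fourier modes by factors at most `q < 1`,
because `ν` has an absolutely continuous part. Since the isometry does not preserve the constants,
the square of the transfer operator is a strict contraction and the expectation decays
exponentially. Conditioning on the phases which fall in a set where `ν` has bounded density makes
the singular part harmless, and Borel–Cantelli together with the at most exponential growth of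
`|Φ*ₙ|` gives almost sure exponential decay.

The orbit of the cyclic vector `e₀` is then relatively compact, so the spectrum is pure point, and
every eigenvector is a multiple of an ergodic average of that orbit, so it inherits the decay.
-/

open scoped ComplexConjugate ENNReal

section Torus

/-- The normalised Haar measure of the torus. -/
abbrev haarTorus : Measure Torus := AddCircle.haarAddCircle

lemma ec_coe (x : ℝ) : ec (x : Torus) = exp (x * I) := by
  rw [ec, AddCircle.toCircle_apply_mk, Circle.coe_exp, div_self Real.two_pi_pos.ne', one_mul]

lemma ec_add (x y : Torus) : ec (x + y) = ec x * ec y := by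
  simp [ec, AddCircle.toCircle_add]

lemma ec_zero : ec 0 = 1 := by simp [ec]

lemma norm_ec (x : Torus) : ‖ec x‖ = 1 := Circle.norm_coe _

lemma ec_ne_zero (x : Torus) : ec x ≠ 0 := Circle.coe_ne_zero _

lemma ec_neg (x : Torus) : ec (-x) = (ec x)⁻¹ := by simp [ec, AddCircle.toCircle_neg]

lemma conj_ec (x : Torus) : conj (ec x) = (ec x)⁻¹ := (Circle.coe_inv_eq_conj _).symm

@[fun_prop]
lemma continuous_ec : Continuous ec := continuous_subtype_val.comp AddCircle.continuous_toCircle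

lemma ec_injective : Function.Injective ec :=
  Circle.coe_injective.comp (AddCircle.injective_toCircle Real.two_pi_pos.ne')

lemma isClosedEmbedding_ec : Topology.IsClosedEmbedding ec :=
  continuous_ec.isClosedEmbedding ec_injective

lemma ec_arg {z : ℂ} (hz : ‖z‖ = 1) : ec ((arg z : ℝ) : Torus) = z := by
  rw [ec_coe]
  simpa [hz] using norm_mul_exp_arg_mul_I z

lemma fourier_eq_ec (n : ℤ) (x : Torus) : fourier n x = ec (n • x) := fourier_apply

lemma ec_zsmul (n : ℤ) (x : Torus) : ec (n • x) = ec x ^ n := by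
  simp [ec, AddCircle.toCircle_zsmul]

lemma integrable_of_continuous {X E : Type*} [TopologicalSpace X] [CompactSpace X]
    [MeasurableSpace X] [OpensMeasurableSpace X] [NormedAddCommGroup E] {μ : Measure X}
    [IsFiniteMeasure μ] {f : X → E} (hf : Continuous f) : Integrable f μ :=
  hf.integrable_of_hasCompactSupport (HasCompactSupport.of_compactSpace _)

section Integral

variable {E : Type*} [NormedAddCommGroup E]

lemma integral_comp_ec [NormedSpace ℝ E] (f : ℂ → E) :
    ∫ x, f (ec x) ∂haarTorus = Real.circleAverage f 0 1 := by
  rw [AddCircle.integral_haarAddCircle, ← AddCircle.intervalIntegral_preimage (2 * Real.pi) 0,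
    zero_add, Real.circleAverage_def]
  simp only [ec_coe, circleMap_zero, ofReal_one, one_mul]

lemma integral_comp_ec_of_diffContOnCl [NormedSpace ℂ E] [CompleteSpace E] {f : ℂ → E}
    (hf : DiffContOnCl ℂ f (Metric.ball 0 1)) : ∫ x, f (ec x) ∂haarTorus = f 0 := by
  rw [integral_comp_ec]
  exact DiffContOnCl.circleAverage (by rwa [abs_one])

lemma integral_poissonKernel_smul_comp_ec [NormedSpace ℂ E] [CompleteSpace E] {f : ℂ → E}
    (hf : DiffContOnCl ℂ f (Metric.ball 0 1)) {w : ℂ} (hw : ‖w‖ < 1) :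
    ∫ x, poissonKernel 0 w (ec x) • f (ec x) ∂haarTorus = f w :=
  (integral_comp_ec (poissonKernel 0 w • f)).trans
    (hf.circleAverage_poissonKernel_smul (by simpa using hw))

end Integral

/-- Nonnegative powers suffice, as conjugation gives the negative ones. -/
lemma measure_ext_of_integral_ec_pow {μ μ' : Measure Torus} [IsFiniteMeasure μ]
    [IsFiniteMeasure μ'] (h : ∀ n : ℕ, ∫ x, ec x ^ n ∂μ = ∫ x, ec x ^ n ∂μ') : μ = μ' := by
  have integral_fourier (n : ℤ) : ∫ x, fourier n x ∂μ = ∫ x, fourier n x ∂μ' := by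
    simp only [fourier_eq_ec, ec_zsmul]
    obtain ⟨n, rfl | rfl⟩ := n.eq_nat_or_neg
    · simpa only [zpow_natCast] using h n
    · simp only [zpow_neg, zpow_natCast, ← inv_pow, ← conj_ec, ← map_pow, integral_conj, h n]
  have continuous_integral (κ : Measure Torus) [IsFiniteMeasure κ] :
      Continuous fun f : C(Torus, ℂ) ↦ ∫ x, f x ∂κ := by
    refine (MeasureTheory.continuous_integral.comp
      (ContinuousMap.toLp (E := ℂ) 1 κ ℂ).continuous).congr fun f ↦ ?_
    exact integral_congr_ae (ContinuousMap.coeFn_toLp κ f)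
  have integral_continuousMap (f : C(Torus, ℂ)) : ∫ x, f x ∂μ = ∫ x, f x ∂μ' := by
    have hf : f ∈ (Submodule.span ℂ (Set.range (@fourier (2 * Real.pi)))).topologicalClosure :=
      (span_fourier_closure_eq_top (T := 2 * Real.pi)).symm ▸ Submodule.mem_top
    refine closure_minimal (t := {f : C(Torus, ℂ) | ∫ x, f x ∂μ = ∫ x, f x ∂μ'}) ?_
      (isClosed_eq (continuous_integral μ) (continuous_integral μ')) hf
    intro f hf
    induction hf using Submodule.span_induction with
    | mem f hf => obtain ⟨n, rfl⟩ := hf; exact integral_fourier n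
    | zero => simp
    | add f g _ _ hf hg =>
      simp only [Set.mem_ofPred_eq, ContinuousMap.add_apply] at hf hg ⊢
      rw [integral_add (integrable_of_continuous f.continuous)
          (integrable_of_continuous g.continuous), integral_add
          (integrable_of_continuous f.continuous) (integrable_of_continuous g.continuous), hf, hg]
    | smul c f _ hf =>
      simp only [Set.mem_ofPred_eq, ContinuousMap.smul_apply, integral_smul] at hf ⊢
      rw [hf]
  refine ext_of_forall_integral_eq_of_IsFiniteMeasure fun f ↦ ofReal_injective ?_
  simp only [← integral_complex_ofReal]
  exact integral_continuousMap ⟨fun x ↦ (f x : ℂ), continuous_ofReal.comp f.continuous⟩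

end Torus

section Blaschke

/-- The involutive Blaschke factor of the unit disc exchanging `0` and `r`. -/
def blaschke (r : ℝ) (v : ℂ) : ℂ := (r - v) / (1 - r * v)

/-- The circle map induced by the Blaschke factor, in the angle coordinate of the torus. -/
def mobiusPhase (r : ℝ) (x : Torus) : Torus := ((arg (blaschke r (ec x)) : ℝ) : Torus)

/-- The square root of the Poisson kernel of the point `r` of the unit disc. -/
def sqrtPoisson (r : ℝ) (x : Torus) : ℝ := √(1 - r ^ 2) / ‖1 - r * ec x‖

variable {r : ℝ}

lemma one_sub_mul_ne_zero (hr : |r| < 1) {v : ℂ} (hv : ‖v‖ ≤ 1) : 1 - r * v ≠ 0 := by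
  refine sub_ne_zero.2 fun h ↦ ?_
  have : ‖(r * v : ℂ)‖ < 1 := by
    rw [norm_mul, norm_real, Real.norm_eq_abs]
    nlinarith [norm_nonneg v, abs_nonneg r]
  simp [← h] at this

lemma norm_one_sub_mul_pos (hr : |r| < 1) (x : Torus) : 0 < ‖1 - r * ec x‖ :=
  norm_pos_iff.2 (one_sub_mul_ne_zero hr (norm_ec x).le)

lemma one_sub_sq_pos (hr : |r| < 1) : 0 < 1 - r ^ 2 := by
  simpa using hr

lemma norm_blaschke_ec (hr : |r| < 1) (x : Torus) : ‖blaschke r (ec x)‖ = 1 := by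
  have h : r - ec x = -(ec x * conj (1 - r * ec x)) := by
    rw [map_sub, map_mul, conj_ec, map_one, conj_ofReal]
    field_simp [ec_ne_zero x]
    ring
  rw [blaschke, norm_div, h, norm_neg, norm_mul, norm_ec, one_mul, norm_conj,
    div_self (norm_one_sub_mul_pos hr x).ne']

lemma ec_mobiusPhase (hr : |r| < 1) (x : Torus) : ec (mobiusPhase r x) = blaschke r (ec x) :=
  ec_arg (norm_blaschke_ec hr x)

@[fun_prop]
lemma continuous_mobiusPhase (hr : |r| < 1) : Continuous (mobiusPhase r) := by
  refine isClosedEmbedding_ec.isEmbedding.continuous_iff.2 ?_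
  simp only [Function.comp_def, ec_mobiusPhase hr, blaschke]
  exact Continuous.div (by fun_prop) (by fun_prop) fun x ↦ one_sub_mul_ne_zero hr (norm_ec x).le

@[fun_prop]
lemma continuous_sqrtPoisson (hr : |r| < 1) : Continuous (sqrtPoisson r) :=
  Continuous.div (by fun_prop) (by fun_prop) fun x ↦ (norm_one_sub_mul_pos hr x).ne'

lemma sqrtPoisson_pos (hr : |r| < 1) (x : Torus) : 0 < sqrtPoisson r x :=
  div_pos (Real.sqrt_pos.2 (one_sub_sq_pos hr)) (norm_one_sub_mul_pos hr x)

lemma sq_sqrtPoisson (hr : |r| < 1) (x : Torus) :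
    sqrtPoisson r x ^ 2 = poissonKernel 0 r (ec x) := by
  have h : ‖1 - r * ec x‖ = ‖ec x - r‖ := by
    rw [← norm_conj, ← one_mul ‖conj (1 - r * ec x)‖, ← norm_ec x, ← norm_mul, map_sub, map_mul,
      conj_ec, map_one, conj_ofReal, mul_sub, mul_left_comm, mul_inv_cancel₀ (ec_ne_zero x),
      mul_one, mul_one]
  rw [sqrtPoisson, div_pow, Real.sq_sqrt (one_sub_sq_pos hr).le, h, poissonKernel]
  simp [norm_ec]

lemma diffContOnCl_blaschke (hr : |r| < 1) : DiffContOnCl ℂ (blaschke r) (Metric.ball 0 1) := by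
  have hden : DiffContOnCl ℂ (fun v : ℂ ↦ 1 - r * v) (Metric.ball 0 1) :=
    Differentiable.diffContOnCl (by fun_prop)
  have hnum : DiffContOnCl ℂ (fun v : ℂ ↦ r - v) (Metric.ball 0 1) :=
    Differentiable.diffContOnCl (by fun_prop)
  refine hnum.smul (hden.inv fun v hv ↦ one_sub_mul_ne_zero hr ?_)
  simpa [closure_ball] using hv

lemma integral_sq_sqrtPoisson_mul_ec_mobiusPhase_pow (hr : |r| < 1) (n : ℕ) :
    ∫ x, sqrtPoisson r x ^ 2 • ec (mobiusPhase r x) ^ n ∂haarTorus = 0 ^ n := by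
  have h := integral_poissonKernel_smul_comp_ec (f := fun v ↦ blaschke r v ^ n)
    ⟨(diffContOnCl_blaschke hr).1.pow n, (diffContOnCl_blaschke hr).2.pow n⟩ (w := r)
    (by rwa [norm_real, Real.norm_eq_abs])
  have hzero : blaschke r r = 0 := by rw [blaschke, sub_self, zero_div]
  simpa only [← sq_sqrtPoisson hr, ← ec_mobiusPhase hr, hzero] using h

lemma map_mobiusPhase_withDensity (hr : |r| < 1) :
    (haarTorus.withDensity fun x ↦ .ofReal (sqrtPoisson r x ^ 2)).map (mobiusPhase r) =
      haarTorus := by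
  have hβ := continuous_mobiusPhase hr
  have hdens : Continuous fun x ↦ sqrtPoisson r x ^ 2 := by fun_prop (disch := assumption)
  have := isFiniteMeasure_withDensity_ofReal
    (integrable_of_continuous (μ := haarTorus) hdens).hasFiniteIntegral
  refine measure_ext_of_integral_ec_pow fun n ↦ ?_
  rw [integral_map hβ.aemeasurable (by fun_prop),
    integral_withDensity_eq_integral_toReal_smul hdens.measurable.ennreal_ofReal (by simp),
    integral_comp_ec_of_diffContOnCl (f := fun z ↦ z ^ n)
      (Differentiable.diffContOnCl (by fun_prop))]
  simp only [ENNReal.toReal_ofReal (sq_nonneg _), zero_pow_eq]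
  rw [integral_sq_sqrtPoisson_mul_ec_mobiusPhase_pow hr, zero_pow_eq]

lemma lintegral_sq_sqrtPoisson_mul_comp_mobiusPhase (hr : |r| < 1) {f : Torus → ℝ≥0∞}
    (hf : Measurable f) :
    ∫⁻ x, .ofReal (sqrtPoisson r x ^ 2) * f (mobiusPhase r x) ∂haarTorus =
      ∫⁻ x, f x ∂haarTorus := by
  have hβ := (continuous_mobiusPhase hr).measurable
  conv_rhs => rw [← map_mobiusPhase_withDensity hr]
  have hdens : Measurable fun x ↦ ENNReal.ofReal (sqrtPoisson r x ^ 2) :=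
    ((continuous_sqrtPoisson hr).pow 2).measurable.ennreal_ofReal
  exact ((lintegral_map hf hβ).trans
    (lintegral_withDensity_eq_lintegral_mul _ hdens (hf.comp hβ))).symm

lemma integral_sq_sqrtPoisson_mul_comp_mobiusPhase (hr : |r| < 1) {f : Torus → ℝ}
    (hf : Continuous f) :
    ∫ x, sqrtPoisson r x ^ 2 * f (mobiusPhase r x) ∂haarTorus = ∫ x, f x ∂haarTorus := by
  conv_rhs => rw [← map_mobiusPhase_withDensity hr]
  have hdens : Measurable fun x ↦ ENNReal.ofReal (sqrtPoisson r x ^ 2) :=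
    ((continuous_sqrtPoisson hr).pow 2).measurable.ennreal_ofReal
  rw [integral_map (continuous_mobiusPhase hr).aemeasurable hf.aestronglyMeasurable,
    integral_withDensity_eq_integral_toReal_smul hdens (by simp)]
  simp only [ENNReal.toReal_ofReal (sq_nonneg _), smul_eq_mul]

end Blaschke

section Szego

mutual

/-- The Szegő polynomials `Φₙ` attached to the phases `θ`, all of whose Verblunsky coefficients
have modulus `|r|`. -/
def szego (t r : ℝ) (θ : ℕ → Torus) : ℕ → ℂ → ℂ
  | 0, _ => -ec (θ 0)
  | n + 1, z => -ec (θ (n + 1)) * (z * szego t r θ n z - r * szegoStar t r θ n z) / t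

/-- The reversed Szegő polynomials `Φₙ*` attached to the phases `θ`. -/
def szegoStar (t r : ℝ) (θ : ℕ → Torus) : ℕ → ℂ → ℂ
  | 0, _ => 1
  | n + 1, z => (szegoStar t r θ n z - r * (z * szego t r θ n z)) / t

end

/-- The unimodular constant `cₙ` in the reversal formula `Φₙ z = cₙ zⁿ conj (Φₙ* z)`. -/
def szegoPhase (θ : ℕ → Torus) : ℕ → ℂ
  | 0 => -ec (θ 0)
  | n + 1 => -ec (θ (n + 1)) * szegoPhase θ n

variable {t r : ℝ} {θ : ℕ → Torus}

lemma szego_succ (n : ℕ) (z : ℂ) : szego t r θ (n + 1) z =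
    -ec (θ (n + 1)) * (z * szego t r θ n z - r * szegoStar t r θ n z) / t := by rw [szego]

lemma szegoStar_succ (n : ℕ) (z : ℂ) : szegoStar t r θ (n + 1) z =
    (szegoStar t r θ n z - r * (z * szego t r θ n z)) / t := by rw [szegoStar]

lemma differentiable_szego_and_szegoStar (n : ℕ) :
    Differentiable ℂ (szego t r θ n) ∧ Differentiable ℂ (szegoStar t r θ n) := by
  induction n with
  | zero =>
    constructor
    · rw [show szego t r θ 0 = fun _ ↦ -ec (θ 0) from rfl]; fun_prop
    · rw [show szegoStar t r θ 0 = fun _ ↦ 1 from rfl]; fun_prop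
  | succ n ih =>
    obtain ⟨hΦ, hΦs⟩ := ih
    constructor
    · rw [funext (szego_succ n)]; fun_prop
    · rw [funext (szegoStar_succ n)]; fun_prop

@[fun_prop]
lemma differentiable_szego (n : ℕ) : Differentiable ℂ (szego t r θ n) :=
  (differentiable_szego_and_szegoStar n).1

@[fun_prop]
lemma differentiable_szegoStar (n : ℕ) : Differentiable ℂ (szegoStar t r θ n) :=
  (differentiable_szego_and_szegoStar n).2

@[fun_prop]
lemma continuous_szego (n : ℕ) : Continuous (szego t r θ n) :=
  (differentiable_szego n).continuous

@[fun_prop]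
lemma continuous_szegoStar (n : ℕ) : Continuous (szegoStar t r θ n) :=
  (differentiable_szegoStar n).continuous

lemma norm_szegoPhase (n : ℕ) : ‖szegoPhase θ n‖ = 1 := by
  induction n with
  | zero => rw [szegoPhase, norm_neg, norm_ec]
  | succ n ih => rw [szegoPhase, norm_mul, norm_neg, norm_ec, ih, one_mul]

lemma sq_norm_szego_succ_sub_sq_norm_szegoStar_succ (ht : t ≠ 0) (hrt : r ^ 2 + t ^ 2 = 1) (n : ℕ)
    (z : ℂ) :
    ‖szego t r θ (n + 1) z‖ ^ 2 - ‖szegoStar t r θ (n + 1) z‖ ^ 2 =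
      ‖z * szego t r θ n z‖ ^ 2 - ‖szegoStar t r θ n z‖ ^ 2 := by
  rw [szego_succ, szegoStar_succ, norm_div, norm_mul, norm_neg, norm_ec, one_mul, norm_div,
    norm_real, Real.norm_eq_abs, div_pow, div_pow, sq_abs, ← sub_div,
    div_eq_iff (pow_ne_zero 2 ht)]
  simp only [Complex.sq_norm, normSq_apply, sub_re, sub_im, mul_re, mul_im, ofReal_re, ofReal_im]
  linear_combination (-((z.re * (szego t r θ n z).re - z.im * (szego t r θ n z).im) ^ 2 +
    (z.re * (szego t r θ n z).im + z.im * (szego t r θ n z).re) ^ 2) +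
    (szegoStar t r θ n z).re ^ 2 + (szegoStar t r θ n z).im ^ 2) * hrt

lemma norm_szego_le_norm_szegoStar (ht : t ≠ 0) (hrt : r ^ 2 + t ^ 2 = 1) {z : ℂ} (hz : ‖z‖ ≤ 1)
    (n : ℕ) : ‖szego t r θ n z‖ ≤ ‖szegoStar t r θ n z‖ := by
  induction n with
  | zero => rw [szego, szegoStar, norm_neg, norm_ec, norm_one]
  | succ n ih =>
    have h : ‖z * szego t r θ n z‖ ≤ ‖szegoStar t r θ n z‖ := by
      rw [norm_mul]
      exact (mul_le_of_le_one_left (norm_nonneg _) hz).trans ih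
    rw [← sq_le_sq₀ (norm_nonneg _) (norm_nonneg _), ← sub_nonpos] at h ⊢
    exact (sq_norm_szego_succ_sub_sq_norm_szegoStar_succ ht hrt n z).trans_le h

lemma szegoStar_ne_zero (ht : t ≠ 0) (hrt : r ^ 2 + t ^ 2 = 1) {z : ℂ} (hz : ‖z‖ ≤ 1) (n : ℕ) :
    szegoStar t r θ n z ≠ 0 := by
  have hr : |r| < 1 := by
    rw [← sq_lt_one_iff_abs_lt_one, ← hrt]
    exact lt_add_of_pos_right _ (by positivity)
  induction n with
  | zero => rw [szegoStar]; exact one_ne_zero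
  | succ n ih =>
    rw [szegoStar_succ]
    refine div_ne_zero (sub_ne_zero.2 fun h ↦ ?_) (ofReal_ne_zero.2 ht)
    have h' : ‖szegoStar t r θ n z‖ ≤ |r| * ‖szegoStar t r θ n z‖ := by
      conv_lhs => rw [h, norm_mul, norm_mul, norm_real, Real.norm_eq_abs]
      gcongr
      exact (mul_le_of_le_one_left (norm_nonneg _) hz).trans
        (norm_szego_le_norm_szegoStar ht hrt hz n)
    nlinarith [norm_pos_iff.2 ih]

lemma szego_eq_szegoPhase_mul_conj_szegoStar (x : Torus) (n : ℕ) :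
    szego t r θ n (ec x) = szegoPhase θ n * ec x ^ n * conj (szegoStar t r θ n (ec x)) := by
  induction n with
  | zero => simp [szego, szegoStar, szegoPhase]
  | succ n ih =>
    have hc : szegoPhase θ n * conj (szegoPhase θ n) = 1 := by
      rw [mul_conj', norm_szegoPhase, ofReal_one, one_pow]
    have hz : ec x * conj (ec x) = 1 := by rw [conj_ec, mul_inv_cancel₀ (ec_ne_zero x)]
    have hzn : ec x ^ n * conj (ec x) ^ n = 1 := by rw [← mul_pow, hz, one_pow]
    rw [szego_succ, szegoStar_succ, ih, szegoPhase]
    simp only [map_div₀, map_sub, map_mul, map_pow, conj_ofReal, conj_conj]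
    linear_combination (-ec (θ (n + 1)) * r * szegoStar t r θ n (ec x) / t) *
      (ec x * conj (ec x) * (ec x ^ n * conj (ec x) ^ n) * hc + ec x ^ n * conj (ec x) ^ n * hz +
        hzn)

lemma norm_szego_ec (x : Torus) (n : ℕ) :
    ‖szego t r θ n (ec x)‖ = ‖szegoStar t r θ n (ec x)‖ := by
  rw [szego_eq_szegoPhase_mul_conj_szegoStar, norm_mul, norm_mul, norm_pow, norm_ec,
    norm_szegoPhase, one_pow, one_mul, one_mul, norm_conj]

/-- The holomorphic part of the difference of two consecutive Bernstein–Szegő weights. -/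
def szegoIncrement (t r : ℝ) (θ : ℕ → Torus) (n : ℕ) (z : ℂ) : ℂ :=
  r / t * szegoPhase θ n * z ^ (n + 1) * (szegoStar t r θ n z * szegoStar t r θ (n + 1) z)⁻¹

lemma inv_mul_conj_eq_add_conj {S S' u F : ℂ} (ht : t ≠ 0) (hrt : r ^ 2 + t ^ 2 = 1) (hS : S ≠ 0)
    (hS' : S' ≠ 0) (hu : u * conj u = S * conj S) (hsucc : t * S' = S - r * u)
    (hF : F = r / t * u * (S * conj S * S')⁻¹) :
    (S' * conj S')⁻¹ = (S * conj S)⁻¹ + F + conj F := by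
  have ht' : (t : ℂ) ≠ 0 := ofReal_ne_zero.2 ht
  have hrt' : (r : ℂ) ^ 2 + (t : ℂ) ^ 2 = 1 := by exact_mod_cast hrt
  have hsucc' := congrArg conj hsucc
  rw [← map_ne_zero conj] at hS hS'
  simp only [hF, map_mul, map_div₀, map_inv₀, map_sub, conj_ofReal, conj_conj] at hsucc' ⊢
  have := (map_ne_zero conj).1 hS
  have := (map_ne_zero conj).1 hS'
  field_simp
  refine mul_left_cancel₀ ht' ?_
  linear_combination (-(t * conj S') - r * conj u) * hsucc - S * hsucc' + r ^ 2 * hu +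
    S * conj S * hrt'

lemma inv_sq_norm_szegoStar_succ (ht : t ≠ 0) (hrt : r ^ 2 + t ^ 2 = 1) (n : ℕ) (x : Torus) :
    ((‖szegoStar t r θ (n + 1) (ec x)‖ : ℂ) ^ 2)⁻¹ =
      ((‖szegoStar t r θ n (ec x)‖ : ℂ) ^ 2)⁻¹ + szegoIncrement t r θ n (ec x) +
        conj (szegoIncrement t r θ n (ec x)) := by
  have hS := szegoStar_ne_zero (θ := θ) ht hrt (norm_ec x).le n
  have hS' := szegoStar_ne_zero (θ := θ) ht hrt (norm_ec x).le (n + 1)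
  rw [← mul_conj', ← mul_conj']
  refine inv_mul_conj_eq_add_conj (u := ec x * szego t r θ n (ec x)) ht hrt hS hS' ?_ ?_ ?_
  · rw [mul_conj', mul_conj', norm_mul, norm_ec, one_mul, norm_szego_ec]
  · rw [szegoStar_succ, mul_div_cancel₀ _ (ofReal_ne_zero.2 ht)]
  · have := (map_ne_zero conj).2 hS
    rw [szegoIncrement, szego_eq_szegoPhase_mul_conj_szegoStar, pow_succ]
    field_simp

lemma diffContOnCl_div_szegoStar (ht : t ≠ 0) (hrt : r ^ 2 + t ^ 2 = 1) (n : ℕ) {f : ℂ → ℂ}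
    (hf : Differentiable ℂ f) :
    DiffContOnCl ℂ (fun z ↦ f z * (szegoStar t r θ n z)⁻¹) (Metric.ball 0 1) :=
  hf.diffContOnCl.smul <| (differentiable_szegoStar n).diffContOnCl.inv fun z hz ↦
    szegoStar_ne_zero ht hrt (by simpa [closure_ball] using hz) n

lemma integral_mul_szegoIncrement (ht : t ≠ 0) (hrt : r ^ 2 + t ^ 2 = 1) (n : ℕ) {f : ℂ → ℂ}
    (hf : Differentiable ℂ f) {m : ℕ} (hm : m ≤ n) :
    ∫ x, (ec x ^ m)⁻¹ * f (ec x) * szegoIncrement t r θ n (ec x) ∂haarTorus = 0 := by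
  have hnum : Differentiable ℂ fun z ↦ r / t * szegoPhase θ n * z ^ (n + 1 - m) * f z := by fun_prop
  have h := integral_comp_ec_of_diffContOnCl
    ((diffContOnCl_div_szegoStar (θ := θ) ht hrt n hnum).smul
      (diffContOnCl_div_szegoStar (θ := θ) ht hrt (n + 1) (differentiable_const (1 : ℂ))))
  simp only [zero_pow (Nat.sub_ne_zero_of_lt (Nat.lt_succ_of_le hm)), mul_zero, zero_mul,
    zero_smul] at h
  refine (integral_congr_ae (.of_forall fun x ↦ ?_)).trans h
  have := ec_ne_zero x
  simp only [szegoIncrement, pow_sub₀ _ this (Nat.le_succ_of_le hm), Nat.succ_eq_add_one,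
    smul_eq_mul, mul_inv]
  ring

lemma continuous_inv_sq_norm_szegoStar (ht : t ≠ 0) (hrt : r ^ 2 + t ^ 2 = 1) (n : ℕ) :
    Continuous fun x ↦ ((‖szegoStar t r θ n (ec x)‖ : ℂ) ^ 2)⁻¹ :=
  Continuous.inv₀ (by fun_prop) fun x ↦ by
    simpa using szegoStar_ne_zero ht hrt (norm_ec x).le n

lemma continuous_szegoIncrement (ht : t ≠ 0) (hrt : r ^ 2 + t ^ 2 = 1) (n : ℕ) :
    Continuous fun x ↦ szegoIncrement t r θ n (ec x) :=
  Continuous.mul (by fun_prop) <| Continuous.inv₀ (by fun_prop) fun x ↦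
    mul_ne_zero (szegoStar_ne_zero ht hrt (norm_ec x).le n)
      (szegoStar_ne_zero ht hrt (norm_ec x).le (n + 1))

lemma integral_mul_conj_szegoIncrement (ht : t ≠ 0) (hrt : r ^ 2 + t ^ 2 = 1) {l j n : ℕ}
    (hjn : j ≤ n) :
    ∫ x, (ec x ^ l)⁻¹ * szegoStar t r θ j (ec x) * conj (szegoIncrement t r θ n (ec x))
      ∂haarTorus = 0 := by
  have hf : Differentiable ℂ fun z ↦ (szegoPhase θ j)⁻¹ * z ^ l * szego t r θ j z := by fun_prop
  have h := congrArg conj (integral_mul_szegoIncrement (θ := θ) ht hrt n hf hjn)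
  rw [← integral_conj, map_zero] at h
  refine (integral_congr_ae (.of_forall fun x ↦ ?_)).trans h
  have hc : szegoPhase θ j ≠ 0 := norm_ne_zero_iff.1 (by simp [norm_szegoPhase])
  have := ec_ne_zero x
  simp only [szego_eq_szegoPhase_mul_conj_szegoStar]
  rw [← conj_conj ((ec x ^ l)⁻¹ * szegoStar t r θ j (ec x)), ← map_mul, map_mul conj (_ ^ l)⁻¹,
    map_inv₀, map_pow, conj_ec, inv_pow, inv_inv]
  field_simp

/-- On the circle, `conj (Φⱼ*)` is a multiple of `z⁻ʲ Φⱼ`, so both halves of the increment of the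
weight integrate to values at `0` of functions vanishing there. -/
lemma integral_mul_szegoStar_mul_inv_sq_norm (ht : t ≠ 0) (hrt : r ^ 2 + t ^ 2 = 1) {l j n : ℕ}
    (hlj : l ≤ j) (hjn : j ≤ n) :
    ∫ x, (ec x ^ l)⁻¹ * szegoStar t r θ j (ec x) *
        ((‖szegoStar t r θ n (ec x)‖ : ℂ) ^ 2)⁻¹ ∂haarTorus =
      conj (0 ^ l * (szegoStar t r θ j 0)⁻¹) := by
  have hpow : Continuous fun x ↦ (ec x ^ l)⁻¹ :=
    Continuous.inv₀ (by fun_prop) fun x ↦ pow_ne_zero l (ec_ne_zero x)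
  induction n, hjn using Nat.le_induction with
  | base =>
    rw [← integral_comp_ec_of_diffContOnCl (diffContOnCl_div_szegoStar (θ := θ) ht hrt j
      (differentiable_pow l)), ← integral_conj]
    refine integral_congr_ae (.of_forall fun x ↦ ?_)
    have := szegoStar_ne_zero (θ := θ) ht hrt (norm_ec x).le j
    have := (map_ne_zero conj).2 this
    simp only [← mul_conj', map_mul, map_inv₀, map_pow, conj_ec, inv_pow]
    field_simp
  | succ n hjn ih =>
    have hw := continuous_inv_sq_norm_szegoStar (θ := θ) ht hrt n
    have hF := continuous_szegoIncrement (θ := θ) ht hrt n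
    simp only [inv_sq_norm_szegoStar_succ ht hrt, mul_add]
    rw [integral_add, integral_add, ih, integral_mul_szegoIncrement ht hrt n
      (differentiable_szegoStar j) (hlj.trans hjn), integral_mul_conj_szegoIncrement ht hrt hjn,
      add_zero, add_zero]
    all_goals exact integrable_of_continuous (by fun_prop)

end Szego

section Matrix

/-- The even entries of the image of `x` under the first of the two block-diagonal factors of the
five-diagonal matrix `Spent`. -/
def rowEven (t r : ℝ) (x : ℕ → ℂ) : ℕ → ℂ
  | 0 => -x 0
  | k + 1 => t * x (2 * k + 1) + r * x (2 * k + 2)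

/-- The odd entries of the image of `x` under the same factor, the counterpart of `rowEven`. -/
def rowOdd (t r : ℝ) (x : ℕ → ℂ) (k : ℕ) : ℂ := r * x (2 * k + 1) - t * x (2 * k + 2)

variable {t r : ℝ}

lemma Spent_of_add_three_le {k j : ℕ} (h : k + 3 ≤ j) : Spent t r k j = 0 := by
  unfold Spent; split_ifs <;> first | rfl | omega

lemma sum_range_Spent_two_mul (x : ℕ → ℂ) (k : ℕ) :
    ∑ j ∈ Finset.range (2 * k + 3), Spent t r (2 * k) j * x j =
      r * rowEven t r x k + t * rowOdd t r x k := by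
  cases k with
  | zero => simp [Finset.sum_range_succ, Spent, rowEven, rowOdd]; ring
  | succ k =>
    have hlow : ∑ j ∈ Finset.range (2 * k + 1), Spent t r (2 * (k + 1)) j * x j = 0 :=
      Finset.sum_eq_zero fun j hj ↦ by
        rw [Finset.mem_range] at hj
        simp [Spent, show j + 1 ≠ 2 * (k + 1) by omega, show j ≠ 2 * (k + 1) by omega,
          show j ≠ 2 * (k + 1) + 1 by omega, show j ≠ 2 * (k + 1) + 2 by omega]
    rw [show 2 * (k + 1) + 3 = 2 * k + 1 + 1 + 1 + 1 + 1 by ring]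
    simp only [Finset.sum_range_succ, hlow, rowEven, rowOdd]
    simp [Spent, mul_add]
    ring

lemma sum_range_Spent_two_mul_add_one (x : ℕ → ℂ) (k : ℕ) :
    ∑ j ∈ Finset.range (2 * k + 1 + 3), Spent t r (2 * k + 1) j * x j =
      -t * rowEven t r x k + r * rowOdd t r x k := by
  cases k with
  | zero => simp [Finset.sum_range_succ, Spent, rowEven, rowOdd]; ring
  | succ k =>
    have hlow : ∑ j ∈ Finset.range (2 * k + 1), Spent t r (2 * (k + 1) + 1) j * x j = 0 :=
      Finset.sum_eq_zero fun j hj ↦ by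
        rw [Finset.mem_range] at hj
        simp [Spent, show j + 2 ≠ 2 * (k + 1) + 1 by omega, show j ≠ 2 * (k + 1) by omega,
          show j ≠ 2 * (k + 1) + 1 by omega,
          show j ≠ 2 * (k + 1) + 1 + 1 by omega]
    rw [show 2 * (k + 1) + 1 + 3 = 2 * k + 1 + 1 + 1 + 1 + 1 + 1 by ring]
    simp only [Finset.sum_range_succ, hlow, rowEven, rowOdd]
    simp [Spent, mul_add, Nat.add_mod]
    ring

end Matrix

section CMV

/-- The unimodular normalisation of the CMV basis. -/
def cmvSign (θ : ℕ → Torus) : ℕ → ℂ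
  | 0 => 1
  | k + 1 => -cmvSign θ k * ec (-θ (2 * k + 1))

/-- The CMV basis: the Laurent polynomials `χₙ` with `χ₀ = 1` which satisfy the eigenvalue equation
of the operator with phases `θ` and are orthonormal for its spectral measure. -/
def cmvBasis (t r : ℝ) (θ : ℕ → Torus) (n : ℕ) (z : ℂ) : ℂ :=
  if Even n then -cmvSign θ (n / 2) * ec (-θ n) * (z ^ (n / 2))⁻¹ * szego t r θ n z
  else -cmvSign θ (n / 2 + 1) * (z ^ (n / 2 + 1))⁻¹ * szegoStar t r θ n z

variable {t r : ℝ} {θ : ℕ → Torus}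

lemma norm_cmvSign (k : ℕ) : ‖cmvSign θ k‖ = 1 := by
  induction k with
  | zero => rw [cmvSign, norm_one]
  | succ k ih => rw [cmvSign, norm_mul, norm_neg, ih, norm_ec, one_mul]

lemma cmvBasis_two_mul (k : ℕ) (z : ℂ) : cmvBasis t r θ (2 * k) z =
    -cmvSign θ k * ec (-θ (2 * k)) * (z ^ k)⁻¹ * szego t r θ (2 * k) z := by
  simp [cmvBasis]

lemma cmvBasis_two_mul_add_one (k : ℕ) (z : ℂ) : cmvBasis t r θ (2 * k + 1) z =
    -cmvSign θ (k + 1) * (z ^ (k + 1))⁻¹ * szegoStar t r θ (2 * k + 1) z := by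
  simp [cmvBasis, show (2 * k + 1) / 2 = k by omega]

lemma ec_neg_mul_ec (x : Torus) : ec (-x) * ec x = 1 := by
  rw [ec_neg, inv_mul_cancel₀ (ec_ne_zero x)]

lemma cmvBasis_zero (z : ℂ) : cmvBasis t r θ 0 z = 1 := by
  rw [← mul_zero 2, cmvBasis_two_mul, mul_zero, cmvSign, szego, pow_zero]
  linear_combination ec_neg_mul_ec (θ 0)

lemma mul_ec_neg_mul_szego_succ (ht : t ≠ 0) (n : ℕ) (z : ℂ) :
    t * (ec (-θ (n + 1)) * szego t r θ (n + 1) z) =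
      r * szegoStar t r θ n z - z * szego t r θ n z := by
  have ht' : (t : ℂ) ≠ 0 := ofReal_ne_zero.2 ht
  rw [szego_succ]
  field_simp
  linear_combination (r * szegoStar t r θ n z - z * szego t r θ n z) * ec_neg_mul_ec (θ (n + 1))

lemma szegoStar_succ_eq_add (ht : t ≠ 0) (hrt : r ^ 2 + t ^ 2 = 1) (n : ℕ) (z : ℂ) :
    szegoStar t r θ (n + 1) z =
      t * szegoStar t r θ n z + r * (ec (-θ (n + 1)) * szego t r θ (n + 1) z) := by
  have ht' : (t : ℂ) ≠ 0 := ofReal_ne_zero.2 ht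
  have hrt' : (r : ℂ) ^ 2 + (t : ℂ) ^ 2 = 1 := by exact_mod_cast hrt
  refine mul_left_cancel₀ ht' ?_
  rw [szegoStar_succ, mul_div_cancel₀ _ ht']
  linear_combination -r * mul_ec_neg_mul_szego_succ (r := r) (θ := θ) ht n z -
    szegoStar t r θ n z * hrt'

lemma rowEven_cmvBasis (ht : t ≠ 0) (hrt : r ^ 2 + t ^ 2 = 1) (k : ℕ) (z : ℂ) :
    rowEven t r (fun n ↦ cmvBasis t r θ n z) k =
      -cmvSign θ k * (z ^ k)⁻¹ * szegoStar t r θ (2 * k) z := by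
  cases k with
  | zero => simp [rowEven, cmvBasis_zero, cmvSign, szegoStar]
  | succ k =>
    rw [rowEven, cmvBasis_two_mul_add_one, show 2 * k + 2 = 2 * (k + 1) by ring, cmvBasis_two_mul,
      show 2 * (k + 1) = 2 * k + 1 + 1 by ring, szegoStar_succ_eq_add ht hrt (2 * k + 1)]
    ring

lemma rowOdd_cmvBasis (ht : t ≠ 0) {z : ℂ} (hz : z ≠ 0) (k : ℕ) :
    rowOdd t r (fun n ↦ cmvBasis t r θ n z) k =
      -cmvSign θ (k + 1) * (z ^ k)⁻¹ * szego t r θ (2 * k + 1) z := by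
  rw [rowOdd, cmvBasis_two_mul_add_one, show 2 * k + 2 = 2 * (k + 1) by ring, cmvBasis_two_mul,
    show 2 * (k + 1) = 2 * k + 1 + 1 by ring, pow_succ]
  have h := mul_ec_neg_mul_szego_succ (r := r) (θ := θ) ht (2 * k + 1) z
  field_simp
  linear_combination cmvSign θ (k + 1) * h

lemma mul_cmvBasis (ht : t ≠ 0) (hrt : r ^ 2 + t ^ 2 = 1) {z : ℂ} (hz : z ≠ 0) (n : ℕ) :
    z * cmvBasis t r θ n z =
      ec (-θ n) * ∑ j ∈ Finset.range (n + 3), Spent t r n j * cmvBasis t r θ j z := by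
  obtain ⟨k, rfl | rfl⟩ := n.even_or_odd'
  · rw [sum_range_Spent_two_mul, rowEven_cmvBasis ht hrt, rowOdd_cmvBasis ht hz, cmvBasis_two_mul,
      cmvSign]
    linear_combination -(cmvSign θ k * ec (-θ (2 * k)) * (z ^ k)⁻¹) *
      mul_ec_neg_mul_szego_succ (r := r) (θ := θ) ht (2 * k) z
  · rw [sum_range_Spent_two_mul_add_one, rowEven_cmvBasis ht hrt, rowOdd_cmvBasis ht hz,
      cmvBasis_two_mul_add_one, cmvSign, szegoStar_succ_eq_add ht hrt, pow_succ]
    field_simp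

@[fun_prop]
lemma continuous_cmvBasis_ec (n : ℕ) : Continuous fun x ↦ cmvBasis t r θ n (ec x) := by
  have hpow (k : ℕ) : Continuous fun x ↦ (ec x ^ k)⁻¹ :=
    Continuous.inv₀ (by fun_prop) fun x ↦ pow_ne_zero k (ec_ne_zero x)
  obtain ⟨k, rfl | rfl⟩ := n.even_or_odd'
  · simp only [cmvBasis_two_mul]
    fun_prop
  · simp only [cmvBasis_two_mul_add_one]
    fun_prop

lemma norm_cmvBasis_ec (n : ℕ) (x : Torus) :
    ‖cmvBasis t r θ n (ec x)‖ = ‖szegoStar t r θ n (ec x)‖ := by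
  obtain ⟨k, rfl | rfl⟩ := n.even_or_odd'
  · simp [cmvBasis_two_mul, norm_cmvSign, norm_ec, norm_szego_ec]
  · simp [cmvBasis_two_mul_add_one, norm_cmvSign, norm_ec]

lemma integral_cmvBasis_mul_inv_sq_norm (ht : t ≠ 0) (hrt : r ^ 2 + t ^ 2 = 1) {n N : ℕ}
    (hn : n ≤ N) :
    ∫ x, cmvBasis t r θ n (ec x) * ((‖szegoStar t r θ N (ec x)‖ : ℂ) ^ 2)⁻¹ ∂haarTorus =
      if n = 0 then 1 else 0 := by
  obtain ⟨k, rfl | rfl⟩ := n.even_or_odd'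
  · have h := congrArg conj (integral_mul_szegoStar_mul_inv_sq_norm (l := k) (θ := θ) ht hrt
      (by omega) hn)
    rw [← integral_conj, conj_conj] at h
    have hcoe (x : Torus) : cmvBasis t r θ (2 * k) (ec x) *
          ((‖szegoStar t r θ N (ec x)‖ : ℂ) ^ 2)⁻¹ =
        -cmvSign θ k * ec (-θ (2 * k)) * szegoPhase θ (2 * k) *
          conj ((ec x ^ k)⁻¹ * szegoStar t r θ (2 * k) (ec x) *
            ((‖szegoStar t r θ N (ec x)‖ : ℂ) ^ 2)⁻¹) := by
      have := ec_ne_zero x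
      simp only [cmvBasis_two_mul, szego_eq_szegoPhase_mul_conj_szegoStar, map_mul, map_inv₀,
        map_pow, conj_ec, conj_ofReal, inv_pow, inv_inv]
      rw [pow_mul' _ 2 k]
      field_simp
    simp only [hcoe]
    rw [integral_const_mul, h]
    rcases k with _ | k
    · simp [cmvSign, szegoPhase, szegoStar, ec_neg_mul_ec]
    · simp
  · have h := integral_mul_szegoStar_mul_inv_sq_norm (l := k + 1) (j := 2 * k + 1) (θ := θ) ht hrt
      (by omega) hn
    simp only [cmvBasis_two_mul_add_one, mul_assoc] at h ⊢
    rw [integral_const_mul, h]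
    simp

end CMV

section Operator

lemma inner_en (n : ℕ) (x : Hn) : inner ℂ (en n) x = x n := by
  simp [en, lp.inner_single_left]

lemma norm_en (n : ℕ) : ‖en n‖ = 1 := by simp [en]

lemma en_apply_self (n : ℕ) : en n n = 1 := by simp [en]

lemma en_apply_of_ne {n m : ℕ} (h : m ≠ n) : en n m = 0 := by simp [en, h]

lemma hasSum_smul_en (x : Hn) : HasSum (fun j ↦ x j • en j) x := by
  have h := lp.hasSum_single (p := 2) (by norm_num) x
  have hcoe (j : ℕ) : lp.single 2 j (x j) = x j • en j := by rw [en, ← lp.single_smul]; simp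
  simpa only [hcoe] using h

/-- `A` has the matrix of `D⁺_θ S⁺` in the canonical basis. -/
def IsPhasedSpent (t r : ℝ) (θ : ℕ → Torus) (A : Hn →L[ℂ] Hn) : Prop :=
  ∀ k j, inner ℂ (en k) (A (en j)) = ec (-θ k) * Spent t r k j

variable {t r : ℝ} {θ : ℕ → Torus} {A : Hn →L[ℂ] Hn}

lemma IsPhasedSpent.apply (hA : IsPhasedSpent t r θ A) (x : Hn) (n : ℕ) :
    A x n = ec (-θ n) * ∑ j ∈ Finset.range (n + 3), Spent t r n j * x j := by
  have h := ((innerSL ℂ (en n)).comp A).hasSum (hasSum_smul_en x)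
  simp only [map_smul, smul_eq_mul, ContinuousLinearMap.comp_apply, innerSL_apply_apply, hA n _,
    inner_en] at h
  rw [Finset.mul_sum]
  refine h.unique ?_
  convert hasSum_sum_of_ne_finset_zero (L := SummationFilter.unconditional ℕ)
    (s := Finset.range (n + 3)) (fun j hj ↦ ?_) using 2 with j
  · ring
  · rw [Spent_of_add_three_le (by simpa using hj)]
    ring

lemma IsPhasedSpent.pow_apply_eq_integral (hA : IsPhasedSpent t r θ A) (ht : t ≠ 0)
    (hrt : r ^ 2 + t ^ 2 = 1) {T n N : ℕ} (hN : n + 2 * T ≤ N) :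
    (A ^ T) (en 0) n = ∫ x, ec x ^ T * cmvBasis t r θ n (ec x) *
      ((‖szegoStar t r θ N (ec x)‖ : ℂ) ^ 2)⁻¹ ∂haarTorus := by
  induction T generalizing n with
  | zero =>
    simp only [pow_zero, one_mul, one_apply_eq_self]
    rw [integral_cmvBasis_mul_inv_sq_norm ht hrt (by omega)]
    split_ifs with h
    · rw [h, en_apply_self]
    · exact en_apply_of_ne h
  | succ T ih =>
    have hw := continuous_inv_sq_norm_szegoStar (r := r) (θ := θ) ht hrt N
    have hrec (x : Torus) : ec x ^ (T + 1) * cmvBasis t r θ n (ec x) *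
          ((‖szegoStar t r θ N (ec x)‖ : ℂ) ^ 2)⁻¹ =
        ec (-θ n) * ∑ j ∈ Finset.range (n + 3), Spent t r n j * (ec x ^ T *
          cmvBasis t r θ j (ec x) * ((‖szegoStar t r θ N (ec x)‖ : ℂ) ^ 2)⁻¹) := by
      rw [pow_succ, mul_assoc (ec x ^ T), mul_cmvBasis ht hrt (ec_ne_zero x)]
      simp only [Finset.mul_sum, Finset.sum_mul]
      exact Finset.sum_congr rfl fun j _ ↦ by ring
    have hint (j : ℕ) : Integrable (fun x ↦ Spent t r n j * (ec x ^ T *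
        cmvBasis t r θ j (ec x) * ((‖szegoStar t r θ N (ec x)‖ : ℂ) ^ 2)⁻¹)) haarTorus :=
      integrable_of_continuous (by fun_prop)
    simp only [hrec]
    rw [integral_const_mul, integral_finsetSum _ fun j _ ↦ hint j, pow_succ', mul_apply_eq_comp,
      hA.apply]
    congr 1
    refine Finset.sum_congr rfl fun j hj ↦ ?_
    rw [integral_const_mul, ih (by rw [Finset.mem_range] at hj; omega)]

lemma IsPhasedSpent.norm_pow_apply_le (hA : IsPhasedSpent t r θ A) (ht : t ≠ 0)
    (hrt : r ^ 2 + t ^ 2 = 1) {T n N : ℕ} (hN : n + 2 * T ≤ N) :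
    ‖(A ^ T) (en 0) n‖ ≤ ∫ x, ‖szegoStar t r θ n (ec x)‖ * (‖szegoStar t r θ N (ec x)‖ ^ 2)⁻¹
      ∂haarTorus := by
  rw [hA.pow_apply_eq_integral ht hrt hN]
  refine (norm_integral_le_integral_norm _).trans_eq (integral_congr_ae (.of_forall fun x ↦ ?_))
  simp [norm_ec, norm_cmvBasis_ec]

end Operator

section FourierCoefficients

lemma haarTorus_singleton (x : Torus) : haarTorus {x} = 0 := by
  have h : (volume : Measure Torus) {x} = 0 := by
    rw [← Metric.closedBall_zero, AddCircle.volume_closedBall]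
    simp
  rw [AddCircle.volume_eq_smul_haarAddCircle, Measure.smul_apply, smul_eq_mul, mul_eq_zero] at h
  exact h.resolve_left (ENNReal.ofReal_pos.2 Real.two_pi_pos).ne'

lemma re_ec_le_one (x : Torus) : (ec x).re ≤ 1 := (re_le_norm _).trans (norm_ec x).le

lemma re_ec_lt_one {x : Torus} (hx : x ≠ 0) : (ec x).re < 1 := by
  refine (re_ec_le_one x).lt_of_ne fun h ↦ hx (ec_injective ?_)
  rw [ec_zero]
  exact Complex.ext h (abs_re_eq_norm.1 (by rw [h, norm_ec, abs_one]))

lemma exists_haarTorus_one_sub_re_ec_lt_le {δ : ℝ≥0∞} (hδ : δ ≠ 0) :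
    ∃ ε > 0, haarTorus {x | 1 - (ec x).re < ε} ≤ δ := by
  have hinter : ⋂ ε > (0 : ℝ), {x : Torus | 1 - (ec x).re < ε} ⊆ {0} := fun x hx ↦ by
    by_contra hx0
    have h : 1 - (ec x).re < 1 - (ec x).re :=
      Set.mem_iInter₂.1 hx _ (sub_pos.2 (re_ec_lt_one hx0))
    exact h.false
  have hlim := tendsto_measure_biInter_gt (μ := haarTorus) (a := (0 : ℝ))
    (s := fun ε ↦ {x : Torus | 1 - (ec x).re < ε})
    (fun ε _ ↦ (isOpen_lt (by fun_prop) continuous_const).measurableSet.nullMeasurableSet)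
    (fun ε ε' _ h x hx ↦ lt_of_lt_of_le hx h) ⟨1, one_pos, measure_ne_top _ _⟩
  rw [measure_mono_null hinter (haarTorus_singleton 0)] at hlim
  obtain ⟨ε, hεδ, hε⟩ := ((hlim.eventually (gt_mem_nhds (pos_iff_ne_zero.2 hδ))).and
    self_mem_nhdsWithin).exists
  exact ⟨ε, hε, hεδ.le⟩

/-- Rotating by the phase of the integral turns its modulus into a real part. -/
lemma exists_integral_re_ec_add_eq_norm (ν : Measure Torus) [IsFiniteMeasure ν] (m : ℤ) :
    ∃ a, ∫ y, (ec (a + m • y)).re ∂ν = ‖∫ y, ec (m • y) ∂ν‖ := by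
  set w := ∫ y, ec (m • y) ∂ν
  refine ⟨((-arg w : ℝ) : Torus), ?_⟩
  have h := integral_re (𝕜 := ℂ) (μ := ν)
    (integrable_of_continuous (f := fun y ↦ ec (((-arg w : ℝ) : Torus) + m • y)) (by fun_prop))
  simp only [RCLike.re_eq_complex_re] at h
  have hw : ec ((-arg w : ℝ) : Torus) * w = ‖w‖ := by
    conv_lhs => rw [← norm_mul_exp_arg_mul_I w]
    rw [ec_coe, mul_left_comm, ← exp_add]
    simp
  rw [h]
  simp only [ec_add]
  rw [integral_const_mul, hw, ofReal_re]

lemma haarTorus_preimage_add_zsmul {m : ℤ} (hm : m ≠ 0) (a : Torus) {s : Set Torus}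
    (hs : MeasurableSet s) : haarTorus ((fun y ↦ a + m • y) ⁻¹' s) = haarTorus s :=
  ((measurePreserving_add_left haarTorus a).comp
    (Measure.measurePreserving_zsmul haarTorus hm)).measure_preimage hs.nullMeasurableSet

theorem exists_norm_integral_ec_zsmul_le {ν : Measure Torus} [IsProbabilityMeasure ν]
    {G : Set Torus} {M : ℝ≥0∞} (hM : M ≠ ∞) (hGM : ν.restrict G ≤ M • haarTorus)
    (hG : ν G ≠ 0) :
    ∃ q : ℝ, 0 ≤ q ∧ q < 1 ∧ ∀ m : ℤ, m ≠ 0 → ‖∫ y, ec (m • y) ∂ν‖ ≤ q := by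
  obtain ⟨δ, hδ, hMδ⟩ : ∃ δ : ℝ≥0∞, δ ≠ 0 ∧ M * δ ≤ ν G / 2 :=
    ⟨ν G / 2 / (M + 1), by simp [ENNReal.div_eq_zero_iff, hG, hM],
      (mul_le_mul_left le_self_add _).trans ENNReal.mul_div_le⟩
  obtain ⟨ε, hε, hεδ⟩ := exists_haarTorus_one_sub_re_ec_lt_le hδ
  have hG_real : 0 < ν.real G := ENNReal.toReal_pos hG (measure_ne_top _ _)
  refine ⟨max 0 (1 - ε * (ν.real G / 2)), le_max_left _ _,
    max_lt one_pos (sub_lt_self _ (by positivity)), fun m hm ↦ le_max_of_le_right ?_⟩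
  obtain ⟨a, ha⟩ := exists_integral_re_ec_add_eq_norm ν m
  set f : Torus → ℝ := fun y ↦ 1 - (ec (a + m • y)).re
  have hf : Continuous f := by fun_prop
  have hf_int : ∫ y, f y ∂ν = 1 - ‖∫ y, ec (m • y) ∂ν‖ := by
    rw [integral_sub (integrable_const _) (integrable_of_continuous (by fun_prop)), ha]
    simp
  have hsmall : ν.real (G ∩ {y | f y < ε}) ≤ ν.real G / 2 := by
    have hle := hGM {y | f y < ε}
    rw [Measure.restrict_apply (isOpen_lt hf continuous_const).measurableSet, Set.inter_comm,
      Measure.smul_apply, smul_eq_mul] at hle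
    have hhaar : haarTorus {y | f y < ε} ≤ δ := (haarTorus_preimage_add_zsmul hm a
      (s := {x | 1 - (ec x).re < ε})
      (isOpen_lt (by fun_prop) continuous_const).measurableSet).trans_le hεδ
    have hhalf : ν (G ∩ {y | f y < ε}) ≤ ν G / 2 := hle.trans (le_trans (by gcongr) hMδ)
    simpa [Measure.real] using ENNReal.toReal_mono
      (ENNReal.div_ne_top (measure_ne_top ν G) two_ne_zero) hhalf
  have hlarge : ν.real G / 2 ≤ ν.real {y | ε ≤ f y} := by
    have hcover : G ⊆ (G ∩ {y | f y < ε}) ∪ {y | ε ≤ f y} := fun y hy ↦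
      (lt_or_ge (f y) ε).imp (fun h ↦ ⟨hy, h⟩) id
    linarith [(measureReal_mono (μ := ν) hcover).trans (measureReal_union_le _ _)]
  have hmarkov := mul_meas_ge_le_integral_of_nonneg (μ := ν) (f := f)
    (.of_forall fun y ↦ sub_nonneg.2 (re_ec_le_one _)) (integrable_of_continuous hf) ε
  nlinarith [mul_le_mul_of_nonneg_left hlarge hε.le]

end FourierCoefficients

section TranslateAverage

/-- The average of the translates of `f` with respect to `ν`, that is, the convolution of `f` with
the reflection of `ν`. -/
def translateAverage {E : Type*} [NormedAddCommGroup E] [NormedSpace ℝ E] (ν : Measure Torus)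
    (f : Torus → E) (x : Torus) : E := ∫ y, f (y + x) ∂ν

variable {ν : Measure Torus}

lemma translateAverage_ofReal (f : Torus → ℝ) :
    translateAverage ν (fun x ↦ (f x : ℂ)) = fun x ↦ ((translateAverage ν f x : ℝ) : ℂ) :=
  funext fun _ ↦ integral_ofReal

variable [IsFiniteMeasure ν]

@[fun_prop]
lemma continuous_translateAverage {E : Type*} [NormedAddCommGroup E] [NormedSpace ℝ E]
    {f : Torus → E} (hf : Continuous f) : Continuous (translateAverage ν f) := by
  have h := continuous_parametric_integral_of_continuous (μ := ν) (f := fun x y ↦ f (y + x))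
    (by simp only [Function.uncurry_def]; fun_prop) isCompact_univ
  rwa [Measure.restrict_univ] at h

lemma fourierCoeff_translateAverage {f : Torus → ℂ} (hf : Continuous f) (m : ℤ) :
    fourierCoeff (translateAverage ν f) m = (∫ y, ec (m • y) ∂ν) * fourierCoeff f m := by
  simp only [fourierCoeff, translateAverage, fourier_eq_ec, smul_eq_mul]
  calc ∫ x, ec (-m • x) * ∫ y, f (y + x) ∂ν ∂haarTorus
      = ∫ x, ∫ y, ec (-m • x) * f (y + x) ∂ν ∂haarTorus := by simp only [integral_const_mul]
    _ = ∫ y, ∫ x, ec (-m • x) * f (y + x) ∂haarTorus ∂ν :=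
      integral_integral_swap_of_hasCompactSupport (by simp only [Function.uncurry_def]; fun_prop)
        (HasCompactSupport.of_compactSpace _)
    _ = ∫ y, ec (m • y) * ∫ x, ec (-m • x) * f x ∂haarTorus ∂ν := by
      refine integral_congr_ae (.of_forall fun y ↦ ?_)
      dsimp only
      rw [← integral_add_left_eq_self (fun x ↦ ec (-m • x) * f x) y, ← integral_const_mul]
      refine integral_congr_ae (.of_forall fun x ↦ ?_)
      dsimp only
      rw [← mul_assoc, ← ec_add, smul_add, ← add_assoc, ← add_smul, add_neg_cancel, zero_smul,
        zero_add]
    _ = (∫ y, ec (m • y) ∂ν) * ∫ x, ec (-m • x) * f x ∂haarTorus := integral_mul_const _ _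

lemma hasSum_sq_norm_fourierCoeff {f : Torus → ℂ} (hf : Continuous f) :
    HasSum (fun m ↦ ‖fourierCoeff f m‖ ^ 2) (∫ x, ‖f x‖ ^ 2 ∂haarTorus) := by
  have hL : MemLp f 2 haarTorus :=
    hf.memLp_of_hasCompactSupport (HasCompactSupport.of_compactSpace _)
  have h := hasSum_sq_fourierCoeff hL.toLp
  rw [fourierCoeff_congr_ae hL.coeFn_toLp] at h
  convert h using 1
  refine integral_congr_ae ?_
  filter_upwards [hL.coeFn_toLp] with x hx
  rw [hx]

variable {f : Torus → ℝ}

lemma fourierCoeff_ofReal_zero (f : Torus → ℝ) :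
    fourierCoeff (fun x ↦ (f x : ℂ)) 0 = ((∫ x, f x ∂haarTorus : ℝ) : ℂ) := by
  simp only [fourierCoeff, neg_zero, fourier_zero, one_smul]
  exact integral_ofReal

lemma sq_integral_le_integral_sq (hf : Continuous f) :
    (∫ x, f x ∂haarTorus) ^ 2 ≤ ∫ x, f x ^ 2 ∂haarTorus := by
  have h := ProbabilityTheory.variance_nonneg f haarTorus
  rwa [ProbabilityTheory.variance_eq_sub
    (hf.memLp_of_hasCompactSupport (HasCompactSupport.of_compactSpace _)), sub_nonneg] at h

lemma integral_translateAverage [IsProbabilityMeasure ν] (hf : Continuous f) :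
    ∫ x, translateAverage ν f x ∂haarTorus = ∫ x, f x ∂haarTorus := by
  have h := fourierCoeff_translateAverage (ν := ν) (continuous_ofReal.comp hf) 0
  simp only [Function.comp_def, translateAverage_ofReal, fourierCoeff_ofReal_zero, zero_smul,
    ec_zero, integral_const, probReal_univ, one_smul, one_mul] at h
  exact_mod_cast h

lemma integral_sq_translateAverage_le [IsProbabilityMeasure ν] {q : ℝ}
    (hq : ∀ m : ℤ, m ≠ 0 → ‖∫ y, ec (m • y) ∂ν‖ ≤ q) (hf : Continuous f) :
    ∫ x, translateAverage ν f x ^ 2 ∂haarTorus ≤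
      q ^ 2 * ∫ x, f x ^ 2 ∂haarTorus + (1 - q ^ 2) * (∫ x, f x ∂haarTorus) ^ 2 := by
  have hF : Continuous fun x ↦ (f x : ℂ) := continuous_ofReal.comp hf
  have hf_sum := hasSum_sq_norm_fourierCoeff hF
  have hav_sum := hasSum_sq_norm_fourierCoeff (continuous_translateAverage (ν := ν) hF)
  simp only [translateAverage_ofReal, norm_real, Real.norm_eq_abs, sq_abs] at hf_sum hav_sum
  rw [← translateAverage_ofReal] at hav_sum
  refine hasSum_le (fun m ↦ ?_) hav_sum ((hf_sum.mul_left (q ^ 2)).add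
    (hasSum_ite_eq (0 : ℤ) ((1 - q ^ 2) * (∫ x, f x ∂haarTorus) ^ 2)))
  rw [fourierCoeff_translateAverage hF, norm_mul, mul_pow]
  split_ifs with hm
  · rw [hm, fourierCoeff_ofReal_zero, norm_real, Real.norm_eq_abs, sq_abs]
    simp only [zero_smul, ec_zero, integral_const, probReal_univ, one_smul, norm_one]
    apply le_of_eq
    ring
  · rw [add_zero]
    gcongr
    exact hq m hm

end TranslateAverage

section Contraction

/-- Composition with `x ↦ lam + mobiusPhase r x`, weighted so as to be an isometry of `L²`. -/
def weightedComp (r : ℝ) (lam : Torus) (f : Torus → ℝ) (x : Torus) : ℝ :=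
  sqrtPoisson r x * f (lam + mobiusPhase r x)

variable {r : ℝ} {lam : Torus}

@[fun_prop]
lemma continuous_weightedComp (hr : |r| < 1) {f : Torus → ℝ} (hf : Continuous f) :
    Continuous (weightedComp r lam f) :=
  (continuous_sqrtPoisson hr).mul
    (hf.comp (continuous_const.add (continuous_mobiusPhase hr)))

lemma integral_weightedComp_mul_weightedComp (hr : |r| < 1) {f k : Torus → ℝ} (hf : Continuous f)
    (hk : Continuous k) :
    ∫ x, weightedComp r lam f x * weightedComp r lam k x ∂haarTorus =
      ∫ x, f x * k x ∂haarTorus := by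
  rw [← integral_add_left_eq_self (fun x ↦ f x * k x) lam,
    ← integral_sq_sqrtPoisson_mul_comp_mobiusPhase hr
      (f := fun x ↦ f (lam + x) * k (lam + x)) (by fun_prop)]
  refine integral_congr_ae (.of_forall fun x ↦ ?_)
  simp only [weightedComp]
  ring

lemma integral_sq_weightedComp (hr : |r| < 1) {f : Torus → ℝ} (hf : Continuous f) :
    ∫ x, weightedComp r lam f x ^ 2 ∂haarTorus = ∫ x, f x ^ 2 ∂haarTorus := by
  simpa only [sq] using integral_weightedComp_mul_weightedComp hr hf hf

lemma sq_inner_le_of_sq_norm_sub_le {E : Type*} [NormedAddCommGroup E] [InnerProductSpace ℝ E]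
    {e g k : E} (he : ‖e‖ = 1) (hg : ‖g‖ = 1) {q F : ℝ} (hF : 0 ≤ F)
    (hk : ‖k‖ ^ 2 - inner ℝ g k ^ 2 ≤ q ^ 2 * F) :
    inner ℝ e k ^ 2 ≤
      (inner ℝ e g ^ 2 + (1 - inner ℝ e g ^ 2) * q ^ 2) * (inner ℝ g k ^ 2 + F) := by
  set d := inner ℝ e g with hd
  set a := inner ℝ g k with ha
  have hgg : inner ℝ g g = (1 : ℝ) := by rw [real_inner_self_eq_norm_sq, hg, one_pow]
  have hperp : inner ℝ (e - d • g) (k - a • g) = inner ℝ e k - d * a := by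
    simp only [inner_sub_left, inner_sub_right, real_inner_smul_left, real_inner_smul_right,
      ← hd, ← ha, hgg]
    ring
  have hperp_e : ‖e - d • g‖ ^ 2 = 1 - d ^ 2 := by
    rw [norm_sub_sq_real, real_inner_smul_right, norm_smul, he, hg, ← hd, mul_one,
      Real.norm_eq_abs, sq_abs]
    ring
  have hperp_k : ‖k - a • g‖ ^ 2 = ‖k‖ ^ 2 - a ^ 2 := by
    rw [norm_sub_sq_real, real_inner_smul_right, norm_smul, hg, real_inner_comm, ← ha, mul_one,
      Real.norm_eq_abs, sq_abs]
    ring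
  have hd_le : 0 ≤ 1 - d ^ 2 := hperp_e ▸ sq_nonneg _
  have hcs : (inner ℝ e k - d * a) ^ 2 ≤ (1 - d ^ 2) * q ^ 2 * F := by
    rw [← hperp, ← sq_abs]
    calc |inner ℝ (e - d • g) (k - a • g)| ^ 2 ≤ (‖e - d • g‖ * ‖k - a • g‖) ^ 2 := by
          gcongr; exact abs_real_inner_le_norm _ _
      _ ≤ (1 - d ^ 2) * q ^ 2 * F := by
          rw [mul_pow, hperp_e, hperp_k, mul_assoc]; gcongr
  set x := inner ℝ e k - d * a
  set p := (1 - d ^ 2) * q ^ 2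
  have : 0 ≤ p := by positivity
  have hcross : 2 * (d * a) * x ≤ d ^ 2 * F + p * a ^ 2 := by
    refine le_of_abs_le (abs_le_of_sq_le_sq ?_ (by positivity))
    nlinarith [mul_le_mul_of_nonneg_left hcs (sq_nonneg (2 * (d * a))),
      sq_nonneg (d ^ 2 * F - p * a ^ 2)]
  rw [show inner ℝ e k = d * a + x by ring]
  nlinarith

lemma integral_sq_sqrtPoisson (hr : |r| < 1) : ∫ x, sqrtPoisson r x ^ 2 ∂haarTorus = 1 := by
  simpa using integral_sq_sqrtPoisson_mul_comp_mobiusPhase hr (f := fun _ ↦ 1) continuous_const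

lemma sq_integral_sqrtPoisson_lt_one (hr : |r| < 1) (hr0 : r ≠ 0) :
    (∫ x, sqrtPoisson r x ∂haarTorus) ^ 2 < 1 := by
  have := continuous_sqrtPoisson hr
  have hnonneg : 0 ≤ ∫ x, sqrtPoisson r x ∂haarTorus :=
    integral_nonneg fun x ↦ (sqrtPoisson_pos hr x).le
  have hvar : ∫ x, (sqrtPoisson r x - 1) ^ 2 ∂haarTorus =
      2 - 2 * ∫ x, sqrtPoisson r x ∂haarTorus := by
    simp only [sub_sq, mul_one, one_pow]
    rw [integral_add (integrable_of_continuous (by fun_prop)) (integrable_const _),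
      integral_sub (integrable_of_continuous (by fun_prop))
        (integrable_of_continuous (by fun_prop)),
      integral_const_mul, integral_sq_sqrtPoisson hr, integral_const, probReal_univ, one_smul]
    ring
  have hpos : 0 < ∫ x, (sqrtPoisson r x - 1) ^ 2 ∂haarTorus := by
    refine Continuous.integral_pos_of_hasCompactSupport_nonneg_nonzero (x := 0) (by fun_prop)
      (HasCompactSupport.of_compactSpace _) (fun x ↦ sq_nonneg _) (pow_ne_zero _ fun h ↦ ?_)
    have h1r : 0 < 1 - r := sub_pos.2 (abs_lt.1 hr).2
    have hval : sqrtPoisson r 0 ^ 2 = 1 := by rw [sub_eq_zero.1 h, one_pow]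
    rw [sqrtPoisson, div_pow, Real.sq_sqrt (one_sub_sq_pos hr).le, ec_zero, mul_one,
      ← ofReal_one, ← ofReal_sub, norm_real, Real.norm_of_nonneg h1r.le,
      div_eq_one_iff_eq (pow_ne_zero _ h1r.ne')] at hval
    exact hr0 (by nlinarith)
  nlinarith

lemma sq_integral_weightedComp_le (hr : |r| < 1) {h : Torus → ℝ} (hh : Continuous h) {q F : ℝ}
    (hF : 0 ≤ F) (hq : ∫ x, h x ^ 2 ∂haarTorus - (∫ x, h x ∂haarTorus) ^ 2 ≤ q ^ 2 * F) :
    (∫ x, weightedComp r lam h x ∂haarTorus) ^ 2 ≤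
      ((∫ x, sqrtPoisson r x ∂haarTorus) ^ 2 +
          (1 - (∫ x, sqrtPoisson r x ∂haarTorus) ^ 2) * q ^ 2) *
        ((∫ x, h x ∂haarTorus) ^ 2 + F) := by
  let toL2 := ContinuousMap.toLp (E := ℝ) 2 haarTorus ℝ
  have inner_toL2 (f k : C(Torus, ℝ)) : inner ℝ (toL2 f) (toL2 k) = ∫ x, f x * k x ∂haarTorus := by
    simp only [toL2, ContinuousMap.inner_toLp, conj_trivial, mul_comm]
  have norm_toL2 (f : C(Torus, ℝ)) : ‖toL2 f‖ ^ 2 = ∫ x, f x ^ 2 ∂haarTorus := by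
    rw [← real_inner_self_eq_norm_sq, inner_toL2]
    simp only [sq]
  let g : C(Torus, ℝ) := ⟨sqrtPoisson r, continuous_sqrtPoisson hr⟩
  let k : C(Torus, ℝ) := ⟨weightedComp r lam h, continuous_weightedComp hr hh⟩
  have hgk : inner ℝ (toL2 g) (toL2 k) = ∫ x, h x ∂haarTorus := by
    have := integral_weightedComp_mul_weightedComp hr (lam := lam) (continuous_const (y := 1)) hh
    simpa [inner_toL2, g, k, weightedComp] using this
  have h1g : inner ℝ (toL2 1) (toL2 g) = ∫ x, sqrtPoisson r x ∂haarTorus := by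
    simp [inner_toL2, g]
  have h1k : inner ℝ (toL2 1) (toL2 k) = ∫ x, weightedComp r lam h x ∂haarTorus := by
    simp [inner_toL2, k]
  have h1 : ‖toL2 1‖ = 1 := by
    exact (pow_eq_one_iff_of_nonneg (norm_nonneg _) two_ne_zero).1
      ((norm_toL2 1).trans (by simp))
  have hg : ‖toL2 g‖ = 1 := by
    exact (pow_eq_one_iff_of_nonneg (norm_nonneg _) two_ne_zero).1
      ((norm_toL2 g).trans (integral_sq_sqrtPoisson hr))
  rw [← h1k, ← h1g, ← hgk]
  refine sq_inner_le_of_sq_norm_sub_le h1 hg hF ?_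
  rw [norm_toL2, hgk]
  exact (integral_sq_weightedComp hr hh).symm ▸ hq

/-- The transfer operator of the averaged phase dynamics `x ↦ y + lam + mobiusPhase r x`, where `y`
has distribution `ν`. -/
def transferOp (ν : Measure Torus) (r : ℝ) (lam : Torus) (f : Torus → ℝ) : Torus → ℝ :=
  weightedComp r lam (translateAverage ν f)

variable {ν : Measure Torus} [IsProbabilityMeasure ν]

@[fun_prop]
lemma continuous_transferOp (hr : |r| < 1) {f : Torus → ℝ} (hf : Continuous f) :
    Continuous (transferOp ν r lam f) :=
  continuous_weightedComp hr (continuous_translateAverage hf)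

lemma integral_sq_transferOp_transferOp_le (hr : |r| < 1) {q : ℝ} (hq1 : q ^ 2 ≤ 1)
    (hq : ∀ m : ℤ, m ≠ 0 → ‖∫ y, ec (m • y) ∂ν‖ ≤ q) {f : Torus → ℝ} (hf : Continuous f) :
    ∫ x, transferOp ν r lam (transferOp ν r lam f) x ^ 2 ∂haarTorus ≤
      (1 - (1 - q ^ 2) ^ 2 * (1 - (∫ x, sqrtPoisson r x ∂haarTorus) ^ 2)) *
        ∫ x, f x ^ 2 ∂haarTorus := by
  have hav := continuous_translateAverage (ν := ν) hf
  have hT := continuous_transferOp (ν := ν) (lam := lam) hr hf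
  set d := ∫ x, sqrtPoisson r x ∂haarTorus
  set a := ∫ x, f x ∂haarTorus
  set F := ∫ x, f x ^ 2 ∂haarTorus - a ^ 2 with hF
  have hF0 : 0 ≤ F := sub_nonneg.2 (sq_integral_le_integral_sq hf)
  have hav_le : ∫ x, translateAverage ν f x ^ 2 ∂haarTorus - a ^ 2 ≤ q ^ 2 * F := by
    linarith [integral_sq_translateAverage_le hq hf]
  have hT_sq : ∫ x, transferOp ν r lam f x ^ 2 ∂haarTorus ≤ a ^ 2 + q ^ 2 * F := by
    rw [transferOp, integral_sq_weightedComp hr hav]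
    linarith
  have hT_mean : (∫ x, transferOp ν r lam f x ∂haarTorus) ^ 2 ≤
      (d ^ 2 + (1 - d ^ 2) * q ^ 2) * (a ^ 2 + F) := by
    have hmean := integral_translateAverage (ν := ν) hf
    have h := sq_integral_weightedComp_le (lam := lam) (q := q) hr hav hF0 (by rwa [hmean])
    rwa [hmean] at h
  calc ∫ x, transferOp ν r lam (transferOp ν r lam f) x ^ 2 ∂haarTorus
      = ∫ x, translateAverage ν (transferOp ν r lam f) x ^ 2 ∂haarTorus :=
      integral_sq_weightedComp hr (continuous_translateAverage hT)
    _ ≤ q ^ 2 * ∫ x, transferOp ν r lam f x ^ 2 ∂haarTorus +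
        (1 - q ^ 2) * (∫ x, transferOp ν r lam f x ∂haarTorus) ^ 2 :=
      integral_sq_translateAverage_le hq hT
    _ ≤ q ^ 2 * (a ^ 2 + F) + (1 - q ^ 2) * ((d ^ 2 + (1 - d ^ 2) * q ^ 2) * (a ^ 2 + F)) := by
      have : q ^ 2 * F ≤ F := mul_le_of_le_one_left hF0 hq1
      gcongr
      linarith
    _ = (1 - (1 - q ^ 2) ^ 2 * (1 - d ^ 2)) * ∫ x, f x ^ 2 ∂haarTorus := by
      rw [hF]
      ring

lemma continuous_iterate_transferOp (hr : |r| < 1) (n : ℕ) :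
    Continuous ((transferOp ν r lam)^[n] fun _ ↦ 1) := by
  induction n with
  | zero => exact continuous_const
  | succ n ih => rw [Function.iterate_succ_apply']; exact continuous_transferOp hr ih

lemma integral_sq_iterate_transferOp_le (hr : |r| < 1) {q K : ℝ} (hq1 : q ^ 2 ≤ 1)
    (hq : ∀ m : ℤ, m ≠ 0 → ‖∫ y, ec (m • y) ∂ν‖ ≤ q) (hK0 : 0 ≤ K)
    (hK : 1 - (1 - q ^ 2) ^ 2 * (1 - (∫ x, sqrtPoisson r x ∂haarTorus) ^ 2) ≤ K) (k : ℕ) :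
    ∫ x, ((transferOp ν r lam)^[2 * k] fun _ ↦ 1) x ^ 2 ∂haarTorus ≤ K ^ k := by
  induction k with
  | zero => simp
  | succ k ih =>
    rw [mul_add, mul_one, add_comm, Function.iterate_add_apply, pow_succ']
    refine (integral_sq_transferOp_transferOp_le hr hq1 hq
      (continuous_iterate_transferOp hr _)).trans ?_
    gcongr

lemma integral_sq_transferOp_le (hr : |r| < 1) {q : ℝ} (hq1 : q ^ 2 ≤ 1)
    (hq : ∀ m : ℤ, m ≠ 0 → ‖∫ y, ec (m • y) ∂ν‖ ≤ q) {f : Torus → ℝ} (hf : Continuous f) :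
    ∫ x, transferOp ν r lam f x ^ 2 ∂haarTorus ≤ ∫ x, f x ^ 2 ∂haarTorus := by
  rw [transferOp, integral_sq_weightedComp hr (continuous_translateAverage hf)]
  nlinarith [integral_sq_translateAverage_le hq hf, sq_integral_le_integral_sq hf]

theorem exists_integral_iterate_transferOp_le (hr : |r| < 1) (hr0 : r ≠ 0) {q : ℝ} (hq0 : 0 ≤ q)
    (hq1 : q < 1) (hq : ∀ m : ℤ, m ≠ 0 → ‖∫ y, ec (m • y) ∂ν‖ ≤ q) :
    ∃ C > 0, ∃ s > 0, s < 1 ∧ ∀ lam n,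
      ∫ x, ((transferOp ν r lam)^[n] fun _ ↦ 1) x ∂haarTorus ≤ C * s ^ n := by
  have hq2 : q ^ 2 < 1 := pow_lt_one₀ hq0 hq1 two_ne_zero
  obtain ⟨s, hs0, hs1, hs⟩ : ∃ s > 0, s < 1 ∧
      1 - (1 - q ^ 2) ^ 2 * (1 - (∫ x, sqrtPoisson r x ∂haarTorus) ^ 2) ≤ s ^ 4 := by
    have hK := mul_pos (pow_pos (sub_pos.2 hq2) 2)
      (sub_pos.2 (sq_integral_sqrtPoisson_lt_one hr hr0))
    have hlim : Tendsto (fun s : ℝ ↦ s ^ 4) (nhdsWithin 1 (Set.Iio 1)) (nhds 1) := by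
      simpa using ((continuous_pow 4).tendsto (1 : ℝ)).mono_left nhdsWithin_le_nhds
    obtain ⟨s, hs, hs0, hs1⟩ := ((hlim.eventually (lt_mem_nhds (sub_lt_self 1 hK))).and
      (Ioo_mem_nhdsLT one_pos)).exists
    exact ⟨s, hs0, hs1, hs.le⟩
  refine ⟨s⁻¹, inv_pos.2 hs0, s, hs0, hs1, fun lam n ↦ ?_⟩
  obtain ⟨k, hk⟩ : ∃ k, n = 2 * k ∨ n = 2 * k + 1 := ⟨n / 2, by omega⟩
  have heven := integral_sq_iterate_transferOp_le (lam := lam) hr hq2.le hq (by positivity) hs k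
  have hsq : ∫ x, ((transferOp ν r lam)^[n] fun _ ↦ 1) x ^ 2 ∂haarTorus ≤ (s ^ 4) ^ k := by
    rcases hk with rfl | rfl
    · exact heven
    · rw [Function.iterate_succ_apply']
      exact (integral_sq_transferOp_le hr hq2.le hq
        (continuous_iterate_transferOp hr _)).trans heven
  refine le_of_abs_le (abs_le_of_sq_le_sq ?_ (by positivity))
  refine (sq_integral_le_integral_sq (continuous_iterate_transferOp hr n)).trans (hsq.trans ?_)
  rw [mul_pow, ← pow_mul, ← pow_mul, inv_pow, inv_mul_eq_div, le_div_iff₀ (by positivity),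
    ← pow_add]
  exact pow_le_pow_of_le_one hs0.le hs1.le (by omega)

end Contraction

section Resampling

open Function

variable {ι : Type*} {X : ι → Type*} [DecidableEq ι]

lemma dependsOn_update {β : Type*} {f : (∀ j, X j) → β} {s : Set ι} (hf : DependsOn f s) {i : ι}
    (hi : i ∉ s) (ω : ∀ j, X j) (y : X i) : f (update ω i y) = f ω :=
  hf fun _ hj ↦ update_of_ne (ne_of_mem_of_not_mem hj hi) _ _

variable [∀ i, MeasurableSpace (X i)] {μ : ∀ i, Measure (X i)} [∀ i, IsProbabilityMeasure (μ i)]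

lemma measurePreserving_update_infinitePi (i : ι) :
    MeasurePreserving (fun p : (∀ j, X j) × X i ↦ update p.1 i p.2)
      ((Measure.infinitePi μ).prod (μ i)) (Measure.infinitePi μ) := by
  refine ⟨measurable_update', Measure.eq_infinitePi _ fun s A hA ↦ ?_⟩
  have hpreimage : (fun p : (∀ j, X j) × X i ↦ update p.1 i p.2) ⁻¹' Set.pi s A =
      Set.pi (s.erase i) A ×ˢ {y | i ∈ s → y ∈ A i} := by
    ext p
    simp only [Set.mem_preimage, Set.mem_pi, Set.mem_prod, Finset.mem_coe, Finset.mem_erase,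
      Set.mem_ofPred_eq]
    refine ⟨fun h ↦ ⟨fun k hk ↦ ?_, fun hi ↦ ?_⟩, fun h k hk ↦ ?_⟩
    · simpa only [update_of_ne hk.1] using h k hk.2
    · simpa only [update_self] using h i hi
    · rcases eq_or_ne k i with rfl | hki
      · simpa only [update_self] using h.2 hk
      · simpa only [update_of_ne hki] using h.1 k ⟨hki, hk⟩
  rw [Measure.map_apply measurable_update' (.pi s.countable_toSet fun i _ ↦ hA i), hpreimage,
    Measure.prod_prod, Measure.infinitePi_pi _ fun i _ ↦ hA i]
  by_cases hi : i ∈ s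
  · simp only [hi, true_imp_iff, Set.ofPred_mem_eq, Finset.prod_erase_mul]
  · simp [hi]

lemma lintegral_infinitePi_eq_lintegral_update (i : ι) {F : (∀ j, X j) → ℝ≥0∞}
    (hF : Measurable F) :
    ∫⁻ ω, F ω ∂Measure.infinitePi μ =
      ∫⁻ ω, ∫⁻ y, F (update ω i y) ∂μ i ∂Measure.infinitePi μ := by
  rw [← (measurePreserving_update_infinitePi i).lintegral_comp hF]
  exact lintegral_prod _ (hF.comp measurable_update').aemeasurable

end Resampling

section PruferPhases

/-- The contribution of `θ₀, …, θ_{n-1}` to the Prüfer phase `pruferPhase r lam θ n`. -/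
def pruferShift (r : ℝ) (lam : Torus) (θ : ℕ → Torus) : ℕ → Torus
  | 0 => (Real.pi : Torus)
  | n + 1 => mobiusPhase r (θ n + (lam + pruferShift r lam θ n))

/-- The Prüfer phase at spectral parameter `lam`: the argument of the quotient of
`z * szego t r θ n z` by `szegoStar t r θ n z` at `z = ec lam`. -/
def pruferPhase (r : ℝ) (lam : Torus) (θ : ℕ → Torus) (n : ℕ) : Torus :=
  θ n + (lam + pruferShift r lam θ n)

variable {t r : ℝ} {lam : Torus} {θ : ℕ → Torus}

lemma pruferShift_succ (n : ℕ) :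
    pruferShift r lam θ (n + 1) = mobiusPhase r (pruferPhase r lam θ n) := rfl

lemma pruferPhase_succ (n : ℕ) : pruferPhase r lam θ (n + 1) =
    θ (n + 1) + (lam + mobiusPhase r (pruferPhase r lam θ n)) := rfl

lemma dependsOn_pruferShift (n : ℕ) : DependsOn (fun θ ↦ pruferShift r lam θ n) (Set.Iio n) := by
  induction n with
  | zero => exact fun _ _ _ ↦ rfl
  | succ n ih =>
    intro θ θ' h
    have hshift := ih fun i hi ↦ h i (Nat.lt_succ_of_lt hi)
    simp only [pruferShift, h n (Nat.lt_succ_self n), hshift]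

lemma dependsOn_pruferPhase (n : ℕ) : DependsOn (fun θ ↦ pruferPhase r lam θ n) (Set.Iic n) := by
  intro θ θ' h
  have hshift := dependsOn_pruferShift (r := r) (lam := lam) n fun i hi ↦ h i (Set.mem_Iic.2 hi.le)
  simp only [pruferPhase, h n Set.self_mem_Iic, hshift]

lemma measurable_pruferPhase_uncurry (hr : |r| < 1) (n : ℕ) :
    Measurable fun p : Torus × (ℕ → Torus) ↦ pruferPhase r p.1 p.2 n := by
  have hβ := (continuous_mobiusPhase hr).measurable
  induction n with
  | zero => simp only [pruferPhase, pruferShift]; fun_prop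
  | succ n ih => simp only [pruferPhase_succ]; fun_prop

lemma measurable_pruferPhase (hr : |r| < 1) (n : ℕ) :
    Measurable fun θ ↦ pruferPhase r lam θ n :=
  (measurable_pruferPhase_uncurry hr n).comp measurable_prodMk_left

lemma ec_mul_szego_ec (hr : |r| < 1) (n : ℕ) :
    ec lam * szego t r θ n (ec lam) =
      ec (pruferPhase r lam θ n) * szegoStar t r θ n (ec lam) := by
  induction n with
  | zero =>
    simp only [szego, szegoStar, pruferPhase, pruferShift, ec_add, ec_coe, Complex.exp_pi_mul_I]
    ring
  | succ n ih =>
    set x := pruferPhase r lam θ n with hx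
    have hblaschke : blaschke r (ec x) * (1 - r * ec x) = r - ec x :=
      div_mul_cancel₀ _ (one_sub_mul_ne_zero hr (norm_ec x).le)
    rw [szego_succ, szegoStar_succ, ih, pruferPhase_succ, ← hx, ec_add, ec_add, ec_mobiusPhase hr]
    linear_combination (-(ec lam * ec (θ (n + 1)) * szegoStar t r θ n (ec lam) / t)) * hblaschke

lemma abs_eq_sqrt_one_sub_sq (hrt : r ^ 2 + t ^ 2 = 1) : |t| = √(1 - r ^ 2) := by
  rw [← Real.sqrt_sq_eq_abs, ← hrt, add_sub_cancel_left]

lemma norm_szegoStar_succ_ec (hr : |r| < 1) (hrt : r ^ 2 + t ^ 2 = 1) (n : ℕ) :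
    ‖szegoStar t r θ (n + 1) (ec lam)‖ =
      ‖szegoStar t r θ n (ec lam)‖ * (sqrtPoisson r (pruferPhase r lam θ n))⁻¹ := by
  rw [szegoStar_succ, ec_mul_szego_ec hr, sqrtPoisson, inv_div, ← abs_eq_sqrt_one_sub_sq hrt,
    ← mul_assoc, ← one_sub_mul, norm_div, norm_mul, norm_real, Real.norm_eq_abs, mul_comm,
    mul_div_assoc]

lemma norm_szegoStar_ec (hr : |r| < 1) (hrt : r ^ 2 + t ^ 2 = 1) (n : ℕ) :
    ‖szegoStar t r θ n (ec lam)‖ =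
      (∏ k ∈ Finset.range n, sqrtPoisson r (pruferPhase r lam θ k))⁻¹ := by
  induction n with
  | zero => simp [szegoStar]
  | succ n ih => rw [norm_szegoStar_succ_ec hr hrt, ih, Finset.prod_range_succ, mul_inv]

/-- The integrand of the bound `IsPhasedSpent.norm_pow_apply_le`. -/
def szegoRatio (t r : ℝ) (θ : ℕ → Torus) (n N : ℕ) (lam : Torus) : ℝ≥0∞ :=
  .ofReal (‖szegoStar t r θ n (ec lam)‖ * (‖szegoStar t r θ N (ec lam)‖ ^ 2)⁻¹)

lemma szegoRatio_add (hr : |r| < 1) (hrt : r ^ 2 + t ^ 2 = 1) (n j : ℕ) :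
    szegoRatio t r θ n (n + j) lam =
      (∏ k ∈ Finset.range n, .ofReal (sqrtPoisson r (pruferPhase r lam θ k))) *
        ∏ k ∈ Finset.range j, .ofReal (sqrtPoisson r (pruferPhase r lam θ (n + k)) ^ 2) := by
  have hpos (k : ℕ) := sqrtPoisson_pos hr (pruferPhase r lam θ k)
  have hprod : ∏ k ∈ Finset.range n, sqrtPoisson r (pruferPhase r lam θ k) ≠ 0 :=
    Finset.prod_ne_zero_iff.2 fun k _ ↦ (hpos k).ne'
  rw [szegoRatio, norm_szegoStar_ec hr hrt, norm_szegoStar_ec hr hrt, Finset.prod_range_add,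
    ← ENNReal.ofReal_prod_of_nonneg fun k _ ↦ (hpos k).le,
    ← ENNReal.ofReal_prod_of_nonneg fun k _ ↦ sq_nonneg _,
    ← ENNReal.ofReal_mul (Finset.prod_nonneg fun k _ ↦ (hpos k).le), Finset.prod_pow]
  congr 1
  field_simp

lemma measurable_szegoRatio (hr : |r| < 1) (hrt : r ^ 2 + t ^ 2 = 1) (n j : ℕ) :
    Measurable fun p : Torus × (ℕ → Torus) ↦ szegoRatio t r p.2 n (n + j) p.1 := by
  have hg := (continuous_sqrtPoisson hr).measurable
  have hX := measurable_pruferPhase_uncurry hr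
  simp only [szegoRatio_add hr hrt]
  fun_prop

end PruferPhases

section PhaseChain

open Function

/-- The transfer operator `f ↦ p · (f averaged over the next Prüfer phase)` acting on functions with
values in `ℝ≥0∞`. -/
def lintegralTransferOp (ν : Measure Torus) (r : ℝ) (lam : Torus) (p f : Torus → ℝ≥0∞)
    (x : Torus) : ℝ≥0∞ :=
  p x * ∫⁻ y, f (y + (lam + mobiusPhase r x)) ∂ν

variable {t r : ℝ} {lam : Torus} {ν : Measure Torus}

lemma measurable_ofReal_sqrtPoisson (hr : |r| < 1) :
    Measurable fun x ↦ ENNReal.ofReal (sqrtPoisson r x) :=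
  (continuous_sqrtPoisson hr).measurable.ennreal_ofReal

lemma measurable_ofReal_sq_sqrtPoisson (hr : |r| < 1) :
    Measurable fun x ↦ ENNReal.ofReal (sqrtPoisson r x ^ 2) :=
  ((continuous_sqrtPoisson hr).pow 2).measurable.ennreal_ofReal

lemma iterate_transferOp_nonneg (hr : |r| < 1) (n : ℕ) (x : Torus) :
    0 ≤ ((transferOp ν r lam)^[n] fun _ ↦ 1) x := by
  induction n generalizing x with
  | zero => exact zero_le_one
  | succ n ih =>
    rw [iterate_succ_apply']
    exact mul_nonneg (sqrtPoisson_pos hr x).le (integral_nonneg fun y ↦ ih _)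

variable [IsProbabilityMeasure ν]

lemma measurable_lintegralTransferOp (hr : |r| < 1) {p f : Torus → ℝ≥0∞} (hp : Measurable p)
    (hf : Measurable f) : Measurable (lintegralTransferOp ν r lam p f) := by
  have hβ := (continuous_mobiusPhase hr).measurable
  have hcomp : Measurable fun q : Torus × Torus ↦ f (q.2 + (lam + mobiusPhase r q.1)) := by fun_prop
  exact hp.mul hcomp.lintegral_prod_right'

lemma measurable_iterate_lintegralTransferOp (hr : |r| < 1) {p f : Torus → ℝ≥0∞}
    (hp : Measurable p) (hf : Measurable f) (j : ℕ) :
    Measurable ((lintegralTransferOp ν r lam p)^[j] f) := by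
  induction j with
  | zero => exact hf
  | succ j ih => rw [iterate_succ_apply']; exact measurable_lintegralTransferOp hr hp ih

lemma lintegral_lintegralTransferOp_sq (hr : |r| < 1) {f : Torus → ℝ≥0∞} (hf : Measurable f) :
    ∫⁻ x, lintegralTransferOp ν r lam (fun x ↦ .ofReal (sqrtPoisson r x ^ 2)) f x ∂haarTorus =
      ∫⁻ x, f x ∂haarTorus := by
  have hshift : Measurable fun q : Torus × Torus ↦ f (q.2 + (lam + q.1)) := by fun_prop
  calc ∫⁻ x, lintegralTransferOp ν r lam (fun x ↦ .ofReal (sqrtPoisson r x ^ 2)) f x ∂haarTorus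
      = ∫⁻ x, ∫⁻ y, f (y + (lam + x)) ∂ν ∂haarTorus :=
        lintegral_sq_sqrtPoisson_mul_comp_mobiusPhase hr hshift.lintegral_prod_right'
    _ = ∫⁻ y, ∫⁻ x, f (y + lam + x) ∂haarTorus ∂ν := by
        simp only [add_assoc]
        exact lintegral_lintegral_swap hshift.aemeasurable
    _ = ∫⁻ x, f x ∂haarTorus := by
        simp only [lintegral_add_left_eq_self f, lintegral_const, measure_univ, mul_one]

lemma lintegral_iterate_lintegralTransferOp_sq (hr : |r| < 1) (j : ℕ) :
    ∫⁻ x, (lintegralTransferOp ν r lam fun x ↦ .ofReal (sqrtPoisson r x ^ 2))^[j] (fun _ ↦ 1) x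
      ∂haarTorus = 1 := by
  induction j with
  | zero => simp
  | succ j ih =>
    rw [iterate_succ_apply', lintegral_lintegralTransferOp_sq hr
      (measurable_iterate_lintegralTransferOp hr (measurable_ofReal_sq_sqrtPoisson hr)
        measurable_const j), ih]

lemma iterate_lintegralTransferOp_sqrtPoisson (hr : |r| < 1) (n : ℕ) :
    (lintegralTransferOp ν r lam fun x ↦ .ofReal (sqrtPoisson r x))^[n] (fun _ ↦ 1) =
      fun x ↦ .ofReal (((transferOp ν r lam)^[n] fun _ ↦ 1) x) := by
  induction n with
  | zero => simp
  | succ n ih =>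
    have hc := continuous_iterate_transferOp (ν := ν) (lam := lam) hr n
    funext x
    rw [iterate_succ_apply', iterate_succ_apply', ih, lintegralTransferOp, transferOp,
      weightedComp, translateAverage, ENNReal.ofReal_mul (sqrtPoisson_pos hr x).le,
      ofReal_integral_eq_lintegral_ofReal (integrable_of_continuous (by fun_prop))
        (.of_forall fun y ↦ iterate_transferOp_nonneg hr n _)]

lemma lintegral_iterate_lintegralTransferOp_sqrtPoisson (hr : |r| < 1) (n : ℕ) :
    ∫⁻ x, (lintegralTransferOp ν r lam fun x ↦ .ofReal (sqrtPoisson r x))^[n] (fun _ ↦ 1) x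
      ∂haarTorus = .ofReal (∫ x, ((transferOp ν r lam)^[n] fun _ ↦ 1) x ∂haarTorus) := by
  rw [iterate_lintegralTransferOp_sqrtPoisson hr, ofReal_integral_eq_lintegral_ofReal
    (integrable_of_continuous (continuous_iterate_transferOp hr n))
    (.of_forall (iterate_transferOp_nonneg hr n))]

/-- The law of a sequence of independent phases with common distribution `ν`. -/
abbrev iidLaw (ν : Measure Torus) : Measure (ℕ → Torus) :=
  Measure.infinitePi fun _ ↦ ν

variable {W : (ℕ → Torus) → ℝ≥0∞} {n : ℕ}

lemma lintegral_mul_comp_pruferPhase (hr : |r| < 1) {w f : Torus → ℝ≥0∞} (hW : Measurable W)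
    (hWn : DependsOn W {n}ᶜ) (hw : Measurable w) (hf : Measurable f) :
    ∫⁻ θ, W θ * (w (θ n) * f (pruferPhase r lam θ n)) ∂iidLaw ν =
      ∫⁻ θ, W θ * ∫⁻ y, w y * f (y + (lam + pruferShift r lam θ n)) ∂ν ∂iidLaw ν := by
  have hX := measurable_pruferPhase (lam := lam) hr n
  rw [lintegral_infinitePi_eq_lintegral_update n (by fun_prop)]
  refine lintegral_congr fun θ ↦ ?_
  have hshift (y : Torus) :
      pruferShift r lam (update θ n y) n = pruferShift r lam θ n :=
    dependsOn_update (dependsOn_pruferShift n) Set.self_notMem_Iio θ y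
  simp only [dependsOn_update hWn (Set.notMem_compl_iff.2 rfl), pruferPhase, update_self, hshift]
  exact lintegral_const_mul _ (by fun_prop)

lemma measurable_prod_pruferPhase (hr : |r| < 1) {p : Torus → ℝ≥0∞} (hp : Measurable p)
    (n j : ℕ) : Measurable fun θ ↦ ∏ k ∈ Finset.range j, p (pruferPhase r lam θ (n + k)) :=
  Finset.measurable_prod _ fun _ _ ↦ hp.comp (measurable_pruferPhase hr _)

lemma dependsOn_prod_pruferPhase (p : Torus → ℝ≥0∞) (n j : ℕ) :
    DependsOn (fun θ ↦ ∏ k ∈ Finset.range j, p (pruferPhase r lam θ (n + k)))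
      (Set.Iio (n + j)) := by
  intro θ θ' h
  refine Finset.prod_congr rfl fun k hk ↦
    congrArg p (dependsOn_pruferPhase (n + k) fun i hi ↦ h i ?_)
  exact lt_of_le_of_lt hi (Nat.add_lt_add_left (Finset.mem_range.1 hk) n)

lemma dependsOn_mul {s : Set ℕ} {V : (ℕ → Torus) → ℝ≥0∞} (hW : DependsOn W s)
    (hV : DependsOn V s) : DependsOn (fun θ ↦ W θ * V θ) s :=
  fun _ _ h ↦ congrArg₂ (· * ·) (hW h) (hV h)

lemma dependsOn_apply {s : Set ℕ} (w : Torus → ℝ≥0∞) (hn : n ∈ s) :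
    DependsOn (fun θ : ℕ → Torus ↦ w (θ n)) s :=
  fun _ _ h ↦ congrArg w (h n hn)

lemma lintegral_prod_pruferPhase_mul (hr : |r| < 1) {p f : Torus → ℝ≥0∞} (hp : Measurable p)
    (hW : Measurable W) (hWn : DependsOn W (Set.Iic n)) (j : ℕ) (hf : Measurable f) :
    ∫⁻ θ, W θ * (∏ k ∈ Finset.range j, p (pruferPhase r lam θ (n + k))) *
      f (pruferPhase r lam θ (n + j)) ∂iidLaw ν =
      ∫⁻ θ, W θ * ((lintegralTransferOp ν r lam p)^[j] f) (pruferPhase r lam θ n) ∂iidLaw ν := by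
  induction j generalizing f with
  | zero => simp
  | succ j ih =>
    rw [iterate_succ_apply, ← ih (measurable_lintegralTransferOp hr hp hf)]
    have hprod := measurable_prod_pruferPhase (lam := lam) hr hp n (j + 1)
    have hdep : DependsOn
        (fun θ ↦ W θ * ∏ k ∈ Finset.range (j + 1), p (pruferPhase r lam θ (n + k)))
        {n + (j + 1)}ᶜ :=
      dependsOn_mul (hWn.mono fun i hi ↦ by simp only [Set.mem_Iic] at hi; simp; omega)
        ((dependsOn_prod_pruferPhase p n (j + 1)).mono fun i hi ↦ ne_of_lt hi)
    have hstep := lintegral_mul_comp_pruferPhase (lam := lam) (ν := ν) hr (hW.mul hprod) hdep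
      (measurable_const (a := 1)) hf
    simp only [one_mul, Pi.mul_apply] at hstep
    rw [hstep]
    refine lintegral_congr fun θ ↦ ?_
    rw [Finset.prod_range_succ, lintegralTransferOp, ← add_assoc n j 1, pruferShift_succ]
    ring

section Resonance

variable {G : Set Torus} {M : ℝ≥0∞}

lemma lintegral_indicator_mul_comp_pruferPhase_le (hr : |r| < 1) (hG : MeasurableSet G)
    (hGM : ν.restrict G ≤ M • haarTorus) (hW : Measurable W) (hWn : DependsOn W {n}ᶜ)
    {f : Torus → ℝ≥0∞} (hf : Measurable f) :
    ∫⁻ θ, W θ * (G.indicator 1 (θ n) * f (pruferPhase r lam θ n)) ∂iidLaw ν ≤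
      (∫⁻ θ, W θ ∂iidLaw ν) * (M * ∫⁻ x, f x ∂haarTorus) := by
  rw [lintegral_mul_comp_pruferPhase hr hW hWn (measurable_one.indicator hG) hf,
    ← lintegral_mul_const _ hW]
  gcongr with θ
  set a := lam + pruferShift r lam θ n
  calc ∫⁻ y, G.indicator 1 y * f (y + a) ∂ν = ∫⁻ y in G, f (y + a) ∂ν := by
        rw [← lintegral_indicator hG]
        refine lintegral_congr fun y ↦ ?_
        by_cases hy : y ∈ G <;> simp [hy]
    _ ≤ ∫⁻ y, f (y + a) ∂(M • haarTorus) := lintegral_mono' hGM le_rfl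
    _ = M * ∫⁻ x, f x ∂haarTorus := by
        rw [lintegral_smul_measure, lintegral_add_right_eq_self f a, smul_eq_mul]

lemma lintegral_indicator_mul_szegoRatio_le (hr : |r| < 1) (hrt : r ^ 2 + t ^ 2 = 1)
    (hG : MeasurableSet G) (hGM : ν.restrict G ≤ M • haarTorus) (hW : Measurable W)
    (hWn : DependsOn W (Set.Iio n)) (j : ℕ) :
    ∫⁻ θ, W θ * (G.indicator 1 (θ n) * szegoRatio t r θ n (n + j) lam) ∂iidLaw ν ≤
      M * ∫⁻ θ, W θ * ∏ k ∈ Finset.range n, .ofReal (sqrtPoisson r (pruferPhase r lam θ k))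
        ∂iidLaw ν := by
  set F := (lintegralTransferOp ν r lam fun x ↦ .ofReal (sqrtPoisson r x ^ 2))^[j] fun _ ↦ 1
  have hg2 := measurable_ofReal_sq_sqrtPoisson hr
  have hF : Measurable F := measurable_iterate_lintegralTransferOp hr hg2 measurable_const j
  set V := fun θ ↦ W θ * ∏ k ∈ Finset.range n, .ofReal (sqrtPoisson r (pruferPhase r lam θ k))
  have hprod := measurable_prod_pruferPhase (lam := lam) hr (measurable_ofReal_sqrtPoisson hr) 0 n
  simp only [zero_add] at hprod
  have hVm : Measurable V := hW.mul hprod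
  have hVn : DependsOn V (Set.Iio n) := dependsOn_mul hWn (by
    simpa only [zero_add] using dependsOn_prod_pruferPhase (r := r) (lam := lam)
      (fun x ↦ .ofReal (sqrtPoisson r x)) 0 n)
  have : Measurable (G.indicator (1 : Torus → ℝ≥0∞)) := measurable_one.indicator hG
  calc ∫⁻ θ, W θ * (G.indicator 1 (θ n) * szegoRatio t r θ n (n + j) lam) ∂iidLaw ν
      = ∫⁻ θ, V θ * G.indicator 1 (θ n) *
          (∏ k ∈ Finset.range j, .ofReal (sqrtPoisson r (pruferPhase r lam θ (n + k)) ^ 2)) * 1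
          ∂iidLaw ν := by
        refine lintegral_congr fun θ ↦ ?_
        rw [szegoRatio_add hr hrt]
        ring
    _ = ∫⁻ θ, V θ * (G.indicator 1 (θ n) * F (pruferPhase r lam θ n)) ∂iidLaw ν := by
        simp only [← mul_assoc]
        exact lintegral_prod_pruferPhase_mul hr hg2 (by fun_prop)
          (dependsOn_mul (hVn.mono Set.Iio_subset_Iic_self) (dependsOn_apply _ Set.self_mem_Iic)) j
          measurable_const
    _ ≤ (∫⁻ θ, V θ ∂iidLaw ν) * (M * ∫⁻ x, F x ∂haarTorus) :=
        lintegral_indicator_mul_comp_pruferPhase_le hr hG hGM hVm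
          (hVn.mono fun i hi ↦ ne_of_lt hi) hF
    _ = M * ∫⁻ θ, V θ ∂iidLaw ν := by
        rw [lintegral_iterate_lintegralTransferOp_sq hr, mul_one, mul_comm]

lemma lintegral_indicator_mul_prod_sqrtPoisson_le (hr : |r| < 1) (hG : MeasurableSet G)
    (hGM : ν.restrict G ≤ M • haarTorus) {B : ℝ} (hB : ∀ x, sqrtPoisson r x ≤ B) (m d : ℕ) :
    ∫⁻ θ, G.indicator 1 (θ m) *
      ∏ k ∈ Finset.range (m + d), .ofReal (sqrtPoisson r (pruferPhase r lam θ k)) ∂iidLaw ν ≤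
      .ofReal B ^ m * (M * .ofReal (∫ x, ((transferOp ν r lam)^[d] fun _ ↦ 1) x ∂haarTorus)) := by
  set F := (lintegralTransferOp ν r lam fun x ↦ .ofReal (sqrtPoisson r x))^[d] fun _ ↦ 1
  have hg := measurable_ofReal_sqrtPoisson hr
  have hF : Measurable F := measurable_iterate_lintegralTransferOp hr hg measurable_const d
  have : Measurable (G.indicator (1 : Torus → ℝ≥0∞)) := measurable_one.indicator hG
  have hprod := measurable_prod_pruferPhase (lam := lam) hr hg m d
  have hfirst (θ : ℕ → Torus) :
      ∏ k ∈ Finset.range m, ENNReal.ofReal (sqrtPoisson r (pruferPhase r lam θ k)) ≤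
        .ofReal B ^ m := by
    simpa using Finset.prod_le_pow_card (Finset.range m) _ _
      fun k _ ↦ ENNReal.ofReal_le_ofReal (hB (pruferPhase r lam θ k))
  calc ∫⁻ θ, G.indicator 1 (θ m) *
        ∏ k ∈ Finset.range (m + d), .ofReal (sqrtPoisson r (pruferPhase r lam θ k)) ∂iidLaw ν
      ≤ ∫⁻ θ, .ofReal B ^ m * (G.indicator 1 (θ m) * ∏ k ∈ Finset.range d,
          .ofReal (sqrtPoisson r (pruferPhase r lam θ (m + k)))) ∂iidLaw ν := by
        refine lintegral_mono fun θ ↦ ?_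
        rw [Finset.prod_range_add, mul_left_comm]
        gcongr
        exact hfirst θ
    _ = .ofReal B ^ m * ∫⁻ θ, 1 * (G.indicator 1 (θ m) * F (pruferPhase r lam θ m))
          ∂iidLaw ν := by
        rw [lintegral_const_mul _ (by fun_prop)]
        simp only [one_mul, F]
        rw [← lintegral_prod_pruferPhase_mul hr hg (by fun_prop)
          (dependsOn_apply _ Set.self_mem_Iic) d measurable_const]
        simp only [mul_one]
    _ ≤ .ofReal B ^ m * ((∫⁻ _, 1 ∂iidLaw ν) * (M * ∫⁻ x, F x ∂haarTorus)) := by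
        gcongr
        exact lintegral_indicator_mul_comp_pruferPhase_le hr hG hGM measurable_const
          ((dependsOn_const 1).mono (Set.empty_subset _)) hF
    _ = _ := by
        rw [lintegral_one, measure_univ, one_mul,
          lintegral_iterate_lintegralTransferOp_sqrtPoisson hr]

lemma lintegral_indicator_mul_indicator_mul_szegoRatio_le (hr : |r| < 1)
    (hrt : r ^ 2 + t ^ 2 = 1) (hG : MeasurableSet G) (hGM : ν.restrict G ≤ M • haarTorus) {B : ℝ}
    (hB : ∀ x, sqrtPoisson r x ≤ B) (m : ℕ) {d : ℕ} (hd : 0 < d) (j : ℕ) :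
    ∫⁻ θ, G.indicator 1 (θ m) * (G.indicator 1 (θ (m + d)) *
      szegoRatio t r θ (m + d) (m + d + j) lam) ∂iidLaw ν ≤
      M ^ 2 * .ofReal B ^ m *
        .ofReal (∫ x, ((transferOp ν r lam)^[d] fun _ ↦ 1) x ∂haarTorus) := by
  have : Measurable (G.indicator (1 : Torus → ℝ≥0∞)) := measurable_one.indicator hG
  refine (lintegral_indicator_mul_szegoRatio_le hr hrt hG hGM (by fun_prop)
    (dependsOn_apply _ (Set.mem_Iio.2 (Nat.lt_add_of_pos_right hd))) j).trans ?_
  refine (mul_le_mul_right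
    (lintegral_indicator_mul_prod_sqrtPoisson_le hr hG hGM hB m d) M).trans_eq (by ring)

end Resonance

end PhaseChain

section Decay

/-- The almost sure bound on the matrix elements `‖(A ^ T) (en 0) n‖`, uniform in `T`, obtained by
letting the truncation of the Szegő recursion tend to infinity in `szegoRatio`. -/
def decayBound (t r : ℝ) (n : ℕ) (θ : ℕ → Torus) : ℝ≥0∞ :=
  liminf (fun j ↦ ∫⁻ lam, szegoRatio t r θ n (n + j) lam ∂haarTorus) atTop

variable {t r : ℝ} {θ : ℕ → Torus} {ν : Measure Torus}

lemma measurable_lintegral_szegoRatio (hr : |r| < 1) (hrt : r ^ 2 + t ^ 2 = 1) (n j : ℕ) :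
    Measurable fun θ ↦ ∫⁻ lam, szegoRatio t r θ n (n + j) lam ∂haarTorus :=
  (measurable_szegoRatio hr hrt n j).lintegral_prod_left'

lemma measurable_decayBound (hr : |r| < 1) (hrt : r ^ 2 + t ^ 2 = 1) (n : ℕ) :
    Measurable (decayBound t r n) :=
  Measurable.liminf fun j ↦ measurable_lintegral_szegoRatio hr hrt n j

lemma IsPhasedSpent.norm_pow_apply_le_decayBound {A : Hn →L[ℂ] Hn} (hA : IsPhasedSpent t r θ A)
    (ht : t ≠ 0) (hrt : r ^ 2 + t ^ 2 = 1) (T n : ℕ) :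
    .ofReal ‖(A ^ T) (en 0) n‖ ≤ decayBound t r n θ := by
  refine le_liminf_of_le (by isBoundedDefault) ?_
  filter_upwards [eventually_ge_atTop (2 * T)] with j hj
  refine (ENNReal.ofReal_le_ofReal
    (hA.norm_pow_apply_le ht hrt (Nat.add_le_add_left hj n))).trans_eq ?_
  refine ofReal_integral_eq_lintegral_ofReal (integrable_of_continuous ?_)
    (.of_forall fun x ↦ by positivity)
  exact Continuous.mul (by fun_prop) (Continuous.inv₀ (by fun_prop) fun x ↦ pow_ne_zero 2
    (norm_ne_zero_iff.2 (szegoStar_ne_zero ht hrt (norm_ec x).le (n + j))))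

lemma decayBound_add_le (hr : |r| < 1) (hrt : r ^ 2 + t ^ 2 = 1) {b : ℝ} (hb0 : 0 ≤ b)
    (hb : ∀ x, (sqrtPoisson r x)⁻¹ ≤ b) (n j : ℕ) :
    decayBound t r (n + j) θ ≤ .ofReal (b ^ j) * decayBound t r n θ := by
  have hgrowth (lam : Torus) :
      ‖szegoStar t r θ (n + j) (ec lam)‖ ≤ b ^ j * ‖szegoStar t r θ n (ec lam)‖ := by
    induction j with
    | zero => simp
    | succ j ih =>
      rw [← add_assoc, norm_szegoStar_succ_ec hr hrt, pow_succ', mul_assoc, mul_comm b]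
      exact mul_le_mul ih (hb _) (inv_nonneg.2 (sqrtPoisson_pos hr _).le) (by positivity)
  have hshift : decayBound t r n θ =
      liminf (fun i ↦ ∫⁻ lam, szegoRatio t r θ n (n + j + i) lam ∂haarTorus) atTop := by
    rw [decayBound, ← liminf_nat_add _ j]
    simp only [add_assoc, add_comm j]
  rw [hshift, decayBound, ← ENNReal.liminf_const_mul_of_ne_top ENNReal.ofReal_ne_top]
  refine liminf_le_liminf (.of_forall fun i ↦ ?_)
  rw [← lintegral_const_mul' _ _ ENNReal.ofReal_ne_top]
  refine lintegral_mono fun lam ↦ ?_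
  rw [szegoRatio, szegoRatio, ← ENNReal.ofReal_mul (by positivity), ← mul_assoc]
  gcongr
  exact hgrowth lam

lemma lintegral_indicator_mul_indicator_mul_decayBound_le [IsProbabilityMeasure ν]
    (hr : |r| < 1) (hrt : r ^ 2 + t ^ 2 = 1) {G : Set Torus} {M : ℝ≥0∞} (hG : MeasurableSet G)
    (hGM : ν.restrict G ≤ M • haarTorus) {B : ℝ} (hB : ∀ x, sqrtPoisson r x ≤ B) (m : ℕ) {d : ℕ}
    (hd : 0 < d) {D : ℝ}
    (hD : ∀ lam, ∫ x, ((transferOp ν r lam)^[d] fun _ ↦ 1) x ∂haarTorus ≤ D) :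
    ∫⁻ θ, G.indicator 1 (θ m) * (G.indicator 1 (θ (m + d)) * decayBound t r (m + d) θ) ∂iidLaw ν ≤
      M ^ 2 * .ofReal B ^ m * .ofReal D := by
  have : Measurable (G.indicator (1 : Torus → ℝ≥0∞)) := measurable_one.indicator hG
  have hne (y : Torus) : G.indicator (1 : Torus → ℝ≥0∞) y ≠ ∞ := by
    by_cases hy : y ∈ G <;> simp [hy]
  have hmeas (j : ℕ) := measurable_lintegral_szegoRatio (t := t) hr hrt (m + d) j
  simp only [decayBound, ← ENNReal.liminf_const_mul_of_ne_top (hne _)]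
  refine (lintegral_liminf_le fun j ↦ by fun_prop).trans
    (liminf_le_of_frequently_le' (.of_forall fun j ↦ ?_))
  have hratio : Measurable fun p : (ℕ → Torus) × Torus ↦
      szegoRatio t r p.1 (m + d) (m + d + j) p.2 :=
    (measurable_szegoRatio hr hrt (m + d) j).comp measurable_swap
  simp only [← lintegral_const_mul' _ _ (hne _)]
  rw [lintegral_lintegral_swap (Measurable.aemeasurable (by fun_prop))]
  calc _ ≤ ∫⁻ _, M ^ 2 * .ofReal B ^ m * .ofReal D ∂haarTorus := by
        refine lintegral_mono fun lam ↦ ?_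
        refine (lintegral_indicator_mul_indicator_mul_szegoRatio_le
          hr hrt hG hGM hB m hd j).trans ?_
        gcongr
        exact hD lam
    _ = _ := by rw [lintegral_const, measure_univ, mul_one]

lemma ae_eventually_le_pow_of_lintegral_le {Ω : Type*} [MeasurableSpace Ω] {μ : Measure Ω}
    {f : ℕ → Ω → ℝ≥0∞} (hf : ∀ n, Measurable (f n)) {B : ℝ≥0∞} (hB : B ≠ ∞) {σ : ℝ} (hσ0 : 0 < σ)
    (hσ1 : σ < 1) (hle : ∀ n, ∫⁻ ω, f n ω ∂μ ≤ B * .ofReal (σ ^ 2) ^ n) :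
    ∀ᵐ ω ∂μ, ∀ᶠ n in atTop, f n ω ≤ .ofReal σ ^ n := by
  have hσ : ENNReal.ofReal σ ≠ 0 := (ENNReal.ofReal_pos.2 hσ0).ne'
  have hinv : (ENNReal.ofReal σ)⁻¹ * .ofReal σ = 1 :=
    ENNReal.inv_mul_cancel hσ ENNReal.ofReal_ne_top
  have hsum : ∫⁻ ω, ∑' n, (ENNReal.ofReal σ)⁻¹ ^ n * f n ω ∂μ ≠ ∞ := by
    rw [lintegral_tsum fun n ↦ ((hf n).const_mul _).aemeasurable]
    refine ne_top_of_le_ne_top (b := ∑' n, B * ENNReal.ofReal σ ^ n) ?_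
      (ENNReal.tsum_le_tsum fun n ↦ ?_)
    · rw [ENNReal.tsum_mul_left, ENNReal.tsum_geometric]
      exact ENNReal.mul_ne_top hB (ENNReal.inv_ne_top.2
        (tsub_pos_of_lt (ENNReal.ofReal_lt_one.2 hσ1)).ne')
    · calc ∫⁻ ω, (ENNReal.ofReal σ)⁻¹ ^ n * f n ω ∂μ
          ≤ (ENNReal.ofReal σ)⁻¹ ^ n * (B * .ofReal (σ ^ 2) ^ n) := by
            rw [lintegral_const_mul _ (hf n)]; gcongr; exact hle n
        _ = B * ((ENNReal.ofReal σ)⁻¹ * .ofReal σ) ^ n * .ofReal σ ^ n := by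
            rw [ENNReal.ofReal_pow hσ0.le]; ring
        _ = B * .ofReal σ ^ n := by rw [hinv, one_pow, mul_one]
  filter_upwards [ae_lt_top (by fun_prop) hsum] with ω hω
  filter_upwards [(ENNReal.tendsto_atTop_zero_of_tsum_ne_top hω.ne).eventually
    (ge_mem_nhds zero_lt_one)] with n hn
  calc f n ω = .ofReal σ ^ n * ((ENNReal.ofReal σ)⁻¹ ^ n * f n ω) := by
        rw [← mul_assoc, ← mul_pow, mul_comm (ENNReal.ofReal σ), hinv, one_pow, one_mul]
    _ ≤ .ofReal σ ^ n := mul_le_of_le_one_right' hn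

lemma ae_eventually_exists_mem_Ico {X : Type*} [MeasurableSpace X] {ν : Measure X}
    [IsProbabilityMeasure ν] {G : Set X} (hG : MeasurableSet G) (hG0 : ν G ≠ 0) (d : ℕ) :
    ∀ᵐ θ ∂Measure.infinitePi fun _ : ℕ ↦ ν,
      ∀ᶠ k in atTop, ∃ i ∈ Finset.Ico (d * k) (d * k + k), θ i ∈ G := by
  have hGc : ν Gᶜ < 1 := by
    rw [prob_compl_eq_one_sub hG]
    exact ENNReal.sub_lt_self ENNReal.one_ne_top one_ne_zero hG0
  have hmiss (k : ℕ) : Measure.infinitePi (fun _ : ℕ ↦ ν)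
      (Set.pi (Finset.Ico (d * k) (d * k + k)) fun _ ↦ Gᶜ) = ν Gᶜ ^ k := by
    rw [Measure.infinitePi_pi _ fun _ _ ↦ hG.compl, Finset.prod_const, Nat.card_Ico,
      Nat.add_sub_cancel_left]
  have hsum : ∑' k : ℕ, Measure.infinitePi (fun _ : ℕ ↦ ν)
      (Set.pi (Finset.Ico (d * k) (d * k + k)) fun _ ↦ Gᶜ) ≠ ∞ := by
    simp only [hmiss, ENNReal.tsum_geometric]
    exact ENNReal.inv_ne_top.2 (tsub_pos_of_lt hGc).ne'
  filter_upwards [ae_eventually_notMem hsum] with θ hθ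
  filter_upwards [hθ] with k hk
  simpa only [Set.mem_pi, Finset.mem_coe, Set.mem_compl_iff, not_forall, not_not, exists_prop]
    using hk

lemma exists_pow_eq_of_lt_one {x : ℝ} (hx0 : 0 < x) (hx1 : x < 1) {n : ℕ} (hn : n ≠ 0) :
    ∃ y, 0 < y ∧ y < 1 ∧ y ^ n = x :=
  ⟨x ^ (n : ℝ)⁻¹, Real.rpow_pos_of_pos hx0 _, Real.rpow_lt_one hx0.le hx1 (by positivity),
    Real.rpow_inv_natCast_pow hx0.le hn⟩

/-- Exponential decay along a set `S` of sites spreads to all sites as soon as `L` grows at most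
exponentially and `S` meets `[d k, d k + k)` for large `k`: with `b σ ^ d < 1`, walking from
`[d k, d k + k)` to `(d + 1) k` costs less than was gained before. -/
lemma exists_eventually_le_pow_of_frequent {L : ℕ → ℝ≥0∞} {S : Set ℕ} {b σ K : ℝ} (hb : 1 ≤ b)
    (hσ0 : 0 < σ) (hσ1 : σ < 1) (hK : 0 < K)
    (hstep : ∀ n j, L (n + j) ≤ .ofReal (b ^ j) * L n)
    (hdecay : ∀ᶠ n in atTop, n ∈ S → L n ≤ .ofReal (K * σ ^ n))
    (hS : ∀ d, ∀ᶠ k in atTop, ∃ i ∈ Finset.Ico (d * k) (d * k + k), i ∈ S) :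
    ∃ C ρ : ℝ, 0 < C ∧ 0 < ρ ∧ ρ < 1 ∧ ∀ᶠ n in atTop, L n ≤ .ofReal (C * ρ ^ n) := by
  have hb0 : 0 < b := one_pos.trans_le hb
  obtain ⟨d, hd⟩ := exists_pow_lt_of_lt_one (inv_pos.2 hb0) hσ1
  have hd0 : d ≠ 0 := by
    rintro rfl
    exact hd.not_ge (pow_zero σ ▸ inv_le_one_of_one_le₀ hb)
  set τ := b * σ ^ d with hτ
  have hτ0 : 0 < τ := by positivity
  have hτ1 : τ < 1 := (mul_lt_mul_of_pos_left hd hb0).trans_eq (mul_inv_cancel₀ hb0.ne')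
  obtain ⟨ρ, hρ0, hρ1, hρτ⟩ := exists_pow_eq_of_lt_one hτ0 hτ1 d.succ_ne_zero
  refine ⟨K * b ^ d * τ⁻¹, ρ, by positivity, hρ0, hρ1, ?_⟩
  obtain ⟨n₀, hn₀⟩ := eventually_atTop.1 hdecay
  have hdiv : Tendsto (fun n : ℕ ↦ n / (d + 1)) atTop atTop :=
    Nat.tendsto_div_const_atTop d.succ_ne_zero
  filter_upwards [hdiv.eventually (hS d), hdiv.eventually (eventually_ge_atTop n₀)] with n hn hkn
  set k := n / (d + 1)
  obtain ⟨i, hi, hiS⟩ := hn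
  obtain ⟨hdi, hid⟩ := Finset.mem_Ico.1 hi
  have hkd : k ≤ d * k := Nat.le_mul_of_pos_left k (Nat.pos_of_ne_zero hd0)
  have hkn_le : (d + 1) * k ≤ n := Nat.mul_div_le n (d + 1)
  have hn_lt : n < (d + 1) * (k + 1) := Nat.lt_mul_div_succ n d.succ_pos
  obtain ⟨f, rfl⟩ : ∃ f, n = i + f := Nat.exists_eq_add_of_le (by lia)
  have hf : f ≤ k + d := by lia
  have hle : b ^ f * (K * σ ^ i) ≤ K * b ^ d * τ⁻¹ * ρ ^ (i + f) := by
    calc b ^ f * (K * σ ^ i) ≤ b ^ (k + d) * (K * σ ^ (d * k)) := by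
          have hbf : b ^ f ≤ b ^ (k + d) := pow_le_pow_right₀ hb hf
          have hσi : σ ^ i ≤ σ ^ (d * k) := pow_le_pow_of_le_one hσ0.le hσ1.le hdi
          gcongr
      _ = K * b ^ d * τ ^ k := by rw [hτ, mul_pow, ← pow_mul]; ring
      _ = K * b ^ d * τ⁻¹ * ρ ^ ((d + 1) * (k + 1)) := by
          rw [pow_mul ρ, hρτ, pow_succ]; field_simp
      _ ≤ K * b ^ d * τ⁻¹ * ρ ^ (i + f) := by
          have := pow_le_pow_of_le_one hρ0.le hρ1.le hn_lt.le
          gcongr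
  calc L (i + f) ≤ .ofReal (b ^ f) * .ofReal (K * σ ^ i) := by
        grw [hstep, hn₀ i (hkn.trans (hkd.trans hdi)) hiS]
    _ = .ofReal (b ^ f * (K * σ ^ i)) := (ENNReal.ofReal_mul (by positivity)).symm
    _ ≤ .ofReal (K * b ^ d * τ⁻¹ * ρ ^ (i + f)) := by gcongr

end Decay

section AbsolutelyContinuousPart

lemma exists_restrict_le_smul_of_withDensity_rnDeriv_ne_zero {α : Type*} [MeasurableSpace α]
    {μ ν : Measure α} [SigmaFinite μ] [SigmaFinite ν] (h : μ.withDensity (ν.rnDeriv μ) ≠ 0) :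
    ∃ (G : Set α) (n : ℕ), MeasurableSet G ∧ ν.restrict G ≤ (n : ℝ≥0∞) • μ ∧ ν G ≠ 0 := by
  obtain ⟨S, hS, hSsing, hSμ⟩ := Measure.mutuallySingular_singularPart ν μ
  have hf : Measurable (ν.rnDeriv μ) := Measure.measurable_rnDeriv ν μ
  set G : ℕ → Set α := fun n ↦ S ∩ {x | ν.rnDeriv μ x ≤ n}
  have hG (n : ℕ) : MeasurableSet (G n) := hS.inter (measurableSet_le hf measurable_const)
  have hrestrict (n : ℕ) : ν.restrict (G n) = (μ.withDensity (ν.rnDeriv μ)).restrict (G n) := by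
    conv_lhs => rw [ν.haveLebesgueDecomposition_add μ, Measure.restrict_add,
      Measure.restrict_eq_zero.2 (measure_mono_null Set.inter_subset_left hSsing), zero_add]
  by_contra! hnull
  refine h (Measure.measure_univ_eq_zero.1 (measure_mono_null (t := (⋃ n, G n) ∪
    (Sᶜ ∪ {x | ¬ ν.rnDeriv μ x < ∞})) (fun x _ ↦ ?_) (measure_union_null ?_ ?_)))
  · by_cases hxS : x ∈ S
    · by_cases hx : ν.rnDeriv μ x < ∞
      · obtain ⟨n, hn⟩ := ENNReal.exists_nat_gt hx.ne
        exact .inl (Set.mem_iUnion.2 ⟨n, hxS, hn.le⟩)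
      · exact .inr (.inr hx)
    · exact .inr (.inl hxS)
  · refine measure_iUnion_null fun n ↦ ?_
    rw [← Measure.restrict_apply_self, ← hrestrict, Measure.restrict_apply_self]
    refine hnull (G n) n (hG n) ?_
    rw [hrestrict, restrict_withDensity (hG n)]
    calc (μ.restrict (G n)).withDensity (ν.rnDeriv μ)
        ≤ (μ.restrict (G n)).withDensity fun _ ↦ (n : ℝ≥0∞) :=
          withDensity_mono (ae_restrict_of_forall_mem (hG n) fun x hx ↦ hx.2)
      _ ≤ (n : ℝ≥0∞) • μ := by
          rw [withDensity_const]
          gcongr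
          exact Measure.restrict_le_self
  · exact withDensity_absolutelyContinuous _ _
      (measure_union_null hSμ (ae_iff.1 (Measure.rnDeriv_lt_top ν μ)))

end AbsolutelyContinuousPart

section AlmostSureDecay

variable {t r : ℝ} {ν : Measure Torus} [IsProbabilityMeasure ν]

lemma abs_lt_one_of_sq_add_sq_eq_one (ht : t ≠ 0) (hrt : r ^ 2 + t ^ 2 = 1) : |r| < 1 := by
  rw [← sq_lt_one_iff_abs_lt_one, ← hrt]
  exact lt_add_of_pos_right _ (by positivity)

lemma exists_one_le_forall_le_of_continuous {X : Type*} [TopologicalSpace X] [CompactSpace X]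
    {f : X → ℝ} (hf : Continuous f) : ∃ b, 1 ≤ b ∧ ∀ x, f x ≤ b := by
  obtain ⟨b, hb⟩ := (isCompact_range hf).bddAbove
  exact ⟨max 1 b, le_max_left 1 b, fun x ↦ (hb ⟨x, rfl⟩).trans (le_max_right 1 b)⟩

lemma exists_restrict_le_smul_haarTorus (hac : volume.withDensity (ν.rnDeriv volume) ≠ 0) :
    ∃ (G : Set Torus) (M : ℝ≥0∞),
      MeasurableSet G ∧ M ≠ ∞ ∧ ν.restrict G ≤ M • haarTorus ∧ ν G ≠ 0 := by
  obtain ⟨G, n, hG, hle, hG0⟩ := exists_restrict_le_smul_of_withDensity_rnDeriv_ne_zero hac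
  rw [AddCircle.volume_eq_smul_haarAddCircle, smul_smul] at hle
  exact ⟨G, _, hG, ENNReal.mul_ne_top (ENNReal.natCast_ne_top n) ENNReal.ofReal_ne_top, hle, hG0⟩

lemma ae_eventually_decayBound_le (ht : t ≠ 0) (hrt : r ^ 2 + t ^ 2 = 1) {G : Set Torus}
    {M : ℝ≥0∞} (hG : MeasurableSet G) (hM : M ≠ ∞) (hGM : ν.restrict G ≤ M • haarTorus) {C σ : ℝ}
    (hC : 0 ≤ C) (hσ0 : 0 < σ) (hσ1 : σ < 1)
    (hdecay : ∀ lam n, ∫ x, ((transferOp ν r lam)^[n] fun _ ↦ 1) x ∂haarTorus ≤ C * (σ ^ 2) ^ n)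
    (m : ℕ) :
    ∀ᵐ θ ∂iidLaw ν, θ m ∈ G →
      ∀ᶠ n in atTop, θ n ∈ G → decayBound t r n θ ≤ .ofReal (σ⁻¹ ^ (m + 1) * σ ^ n) := by
  have hr := abs_lt_one_of_sq_add_sq_eq_one ht hrt
  have : Measurable (G.indicator (1 : Torus → ℝ≥0∞)) := measurable_one.indicator hG
  have hbound := measurable_decayBound hr hrt
  obtain ⟨B, -, hB⟩ := exists_one_le_forall_le_of_continuous (continuous_sqrtPoisson hr)
  have hle (d : ℕ) : ∫⁻ θ, G.indicator 1 (θ m) * (G.indicator 1 (θ (m + (d + 1))) *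
      decayBound t r (m + (d + 1)) θ) ∂iidLaw ν ≤
      M ^ 2 * .ofReal B ^ m * .ofReal (C * σ ^ 2) * .ofReal (σ ^ 2) ^ d := by
    refine (lintegral_indicator_mul_indicator_mul_decayBound_le hr hrt hG hGM hB m d.succ_pos
      fun lam ↦ hdecay lam (d + 1)).trans_eq ?_
    rw [pow_succ' (σ ^ 2), ← mul_assoc C, ENNReal.ofReal_mul (by positivity),
      ENNReal.ofReal_pow (sq_nonneg σ), mul_assoc _ (ENNReal.ofReal _)]
  filter_upwards [ae_eventually_le_pow_of_lintegral_le (fun d ↦ by fun_prop) (by finiteness) hσ0 hσ1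
    hle] with θ hθ hm
  filter_upwards [(tendsto_sub_atTop_nat (m + 1)).eventually hθ, eventually_ge_atTop (m + 1)]
    with n hn hmn hnG
  obtain ⟨d, rfl⟩ := Nat.exists_eq_add_of_le hmn
  rw [Nat.add_sub_cancel_left, add_comm d, ← add_assoc, Set.indicator_of_mem hm,
    Set.indicator_of_mem hnG, Pi.one_apply, one_mul, Pi.one_apply, one_mul,
    ← ENNReal.ofReal_pow hσ0.le] at hn
  rwa [pow_add σ, ← mul_assoc, ← mul_pow, inv_mul_cancel₀ hσ0.ne', one_pow, one_mul]

theorem ae_exists_eventually_decayBound_le_pow (ht : t ≠ 0) (hr0 : r ≠ 0)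
    (hrt : r ^ 2 + t ^ 2 = 1) (hac : volume.withDensity (ν.rnDeriv volume) ≠ 0) :
    ∀ᵐ θ ∂iidLaw ν, ∃ C ρ : ℝ, 0 < C ∧ 0 < ρ ∧ ρ < 1 ∧
      ∀ᶠ n in atTop, decayBound t r n θ ≤ .ofReal (C * ρ ^ n) := by
  have hr := abs_lt_one_of_sq_add_sq_eq_one ht hrt
  obtain ⟨G, M, hG, hM, hGM, hG0⟩ := exists_restrict_le_smul_haarTorus hac
  obtain ⟨q, hq0, hq1, hq⟩ := exists_norm_integral_ec_zsmul_le hM hGM hG0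
  obtain ⟨C, hC, s, hs0, hs1, hdecay⟩ := exists_integral_iterate_transferOp_le hr hr0 hq0 hq1 hq
  obtain ⟨σ, hσ0, hσ1, rfl⟩ := exists_pow_eq_of_lt_one hs0 hs1 two_ne_zero
  obtain ⟨b, hb1, hb⟩ := exists_one_le_forall_le_of_continuous
    ((continuous_sqrtPoisson hr).inv₀ fun x ↦ (sqrtPoisson_pos hr x).ne')
  have hgood := ae_all_iff.2 fun m ↦
    ae_eventually_decayBound_le ht hrt hG hM hGM hC.le hσ0 hσ1 hdecay m
  have hmeets := ae_all_iff.2 fun d ↦ ae_eventually_exists_mem_Ico hG hG0 d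
  filter_upwards [hgood, hmeets] with θ hgoodθ hmeetsθ
  obtain ⟨_, m, -, hm⟩ := (hmeetsθ 0).exists
  exact exists_eventually_le_pow_of_frequent hb1 hσ0 hσ1 (by positivity)
    (decayBound_add_le hr hrt (zero_le_one.trans hb1) hb) (hgoodθ m hm) hmeetsθ

end AlmostSureDecay

section PointSpectrum

open Topology Function
open ContinuousLinearMap (adjoint)
open InnerProductSpace (rankOne)

lemma exists_strictMono_tendsto_birkhoffAverage {α E : Type*} [NormedAddCommGroup E]
    [NormedSpace ℝ E] [CompleteSpace E] {K : Set E} (hK : IsCompact K) {f : α → α} {g : α → E}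
    {x : α} (hx : ∀ n, g (f^[n] x) ∈ K) :
    ∃ (φ : ℕ → ℕ) (B : E), StrictMono φ ∧
      Tendsto (fun n ↦ birkhoffAverage ℝ f g (φ n) x) atTop (𝓝 B) := by
  have hc : IsCompact (closure (convexHull ℝ K)) :=
    TotallyBounded.isCompact_of_isClosed hK.totallyBounded.convexHull.closure isClosed_closure
  have hmem (n : ℕ) : birkhoffAverage ℝ f g (n + 1) x ∈ closure (convexHull ℝ K) := by
    rw [birkhoffAverage, birkhoffSum, Finset.smul_sum]
    refine subset_closure ((convex_convexHull ℝ K).sum_mem (fun _ _ ↦ by positivity) ?_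
      fun i _ ↦ subset_convexHull ℝ K (hx i))
    rw [Finset.sum_const, Finset.card_range, nsmul_eq_mul, mul_inv_cancel₀ (by positivity)]
  obtain ⟨B, -, φ, hφ, hlim⟩ := hc.tendsto_subseq hmem
  exact ⟨fun n ↦ φ n + 1, B, fun _ _ h ↦ Nat.succ_lt_succ (hφ h), hlim⟩

variable {H : Type*} [NormedAddCommGroup H] [InnerProductSpace ℂ H]

lemma isCompactOperator_rankOne (x y : H) : IsCompactOperator (rankOne ℂ x y) := by
  have h : IsCompactOperator (innerSL ℂ y) :=
    isCompactOperator_of_locallyCompactSpace_dom (innerSL ℂ y)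
  exact h.clm_comp (.toSpanSingleton ℂ x)

/-- The covariance operator of the first `n` points of the orbit of `x` under `A`. -/
def orbitCovariance (A : H →L[ℂ] H) (x : H) (n : ℕ) : H →L[ℂ] H :=
  birkhoffAverage ℝ A (fun z ↦ rankOne ℂ z z) n x

variable {A : H →L[ℂ] H}

lemma orbitCovariance_apply (x : H) (n : ℕ) (y : H) :
    orbitCovariance A x n y =
      (n : ℝ)⁻¹ • ∑ i ∈ Finset.range n, inner ℂ (A^[i] x) y • A^[i] x := by
  simp [orbitCovariance, birkhoffAverage, birkhoffSum]

lemma isCompactOperator_orbitCovariance (x : H) (n : ℕ) :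
    IsCompactOperator (orbitCovariance A x n) :=
  (compactOperator (RingHom.id ℂ) H H).smul_of_tower_mem _
    ((compactOperator (RingHom.id ℂ) H H).sum_mem fun _ _ ↦ isCompactOperator_rankOne _ _)

lemma isSymmetric_orbitCovariance (x : H) (n : ℕ) :
    (orbitCovariance A x n : H →ₗ[ℂ] H).IsSymmetric := by
  intro u v
  simp [orbitCovariance_apply, sum_inner, inner_sum, inner_smul_left_eq_smul,
    inner_smul_right_eq_smul, inner_smul_left, mul_comm]

lemma re_inner_orbitCovariance (x : H) (n : ℕ) (y : H) :
    (inner ℂ y (orbitCovariance A x n y)).re =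
      (n : ℝ)⁻¹ * ∑ i ∈ Finset.range n, ‖inner ℂ (A^[i] x) y‖ ^ 2 := by
  have hre (z : H) : (inner ℂ z y * inner ℂ y z).re = ‖inner ℂ z y‖ ^ 2 := by
    rw [← inner_conj_symm y z, Complex.mul_conj', ← Complex.ofReal_pow, ofReal_re]
  simp only [orbitCovariance_apply, inner_smul_right_eq_smul, inner_sum, Complex.smul_re,
    Complex.re_sum, hre, smul_eq_mul]

lemma apply_orbitCovariance (hA : ∀ x, ‖A x‖ = ‖x‖) (x : H) (n : ℕ) (y : H) :
    A (orbitCovariance A x n y) = orbitCovariance A (A x) n (A y) := by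
  have hinner := (LinearMap.norm_map_iff_inner_map_map A).1 hA
  simp only [orbitCovariance_apply, A.map_smul_of_tower, map_sum, ← iterate_succ_apply,
    iterate_succ_apply', hinner]

lemma continuous_rankOne_self : Continuous fun x : H ↦ rankOne ℂ x x := by
  simp only [InnerProductSpace.rankOne_def']
  exact (ContinuousLinearMap.toSpanSingletonLIE ℂ H).continuous.clm_comp
    (innerSL ℂ (E := H)).continuous

lemma norm_eq_one_of_apply_eq_smul (hA : ∀ x, ‖A x‖ = ‖x‖) {ψ : H} (hψ : ψ ≠ 0) {μ : ℂ}
    (h : A ψ = μ • ψ) : ‖μ‖ = 1 := by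
  have := hA ψ
  rw [h, norm_smul] at this
  exact (mul_eq_right₀ (norm_ne_zero_iff.2 hψ)).1 this

lemma mem_orthogonal_span {S : Set H} {w : H} :
    w ∈ (Submodule.span ℂ S)ᗮ ↔ ∀ ψ ∈ S, inner ℂ ψ w = 0 := by
  refine ⟨fun h ψ hψ ↦ h ψ (Submodule.subset_span hψ), fun h u hu ↦ ?_⟩
  rw [← Submodule.mem_orthogonal_singleton_iff_inner_left]
  exact Submodule.span_le.2 (fun ψ hψ ↦
    Submodule.mem_orthogonal_singleton_iff_inner_left.2 (h ψ hψ)) hu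

variable [CompleteSpace H]

lemma adjoint_apply_eq_inv_smul (hA : ∀ x, ‖A x‖ = ‖x‖) {ψ : H} {μ : ℂ} (hμ : μ ≠ 0)
    (h : A ψ = μ • ψ) : adjoint A ψ = μ⁻¹ • ψ := by
  have := DFunLike.congr_fun (A.norm_map_iff_adjoint_comp_self.1 hA) ψ
  rwa [ContinuousLinearMap.comp_apply, h, map_smul, one_apply_eq_self,
    ← eq_inv_smul_iff₀ hμ] at this

lemma inner_iterate_eq_zero (hA : ∀ x, ‖A x‖ = ‖x‖) {ψ x : H} {μ : ℂ} (h : A ψ = μ • ψ)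
    (hx : inner ℂ ψ x = 0) (n : ℕ) : inner ℂ ψ (A^[n] x) = 0 := by
  rcases eq_or_ne ψ 0 with rfl | hψ
  · exact inner_zero_left _
  have hμ : μ ≠ 0 := norm_ne_zero_iff.1 (norm_eq_one_of_apply_eq_smul hA hψ h ▸ one_ne_zero)
  induction n with
  | zero => exact hx
  | succ n ih =>
    rw [iterate_succ_apply', ← ContinuousLinearMap.adjoint_inner_left,
      adjoint_apply_eq_inv_smul hA hμ h, inner_smul_left, ih, mul_zero]

/-- Each nonzero eigenvalue of `B` has a finite-dimensional `A`-invariant eigenspace, which would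
contain an eigenvector of `A`. -/
lemma eq_zero_of_commute_of_apply_eigenvector {B : H →L[ℂ] H} (hB : IsCompactOperator B)
    (hs : (B : H →ₗ[ℂ] H).IsSymmetric) (hcomm : ∀ x, A (B x) = B (A x))
    (hker : ∀ ψ (μ : ℂ), A ψ = μ • ψ → B ψ = 0) : B = 0 := by
  rw [← ContinuousLinearMap.eq_zero_of_forall_hasEigenvalue_eq_zero hB hs]
  intro β hβ
  by_contra hβ0
  have := ContinuousLinearMap.finite_dimensional_eigenspace hB β hβ0
  set V := Module.End.eigenspace (B : H →ₗ[ℂ] H) β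
  have : Nontrivial V := Submodule.nontrivial_iff_ne_bot.2 hβ
  have mem_V (x : H) : x ∈ V ↔ B x = β • x := Module.End.mem_eigenspace_iff
  have hinv : ∀ x ∈ V, (A : H →ₗ[ℂ] H) x ∈ V := fun x hx ↦ by
    rw [mem_V] at hx ⊢
    rw [ContinuousLinearMap.coe_coe, ← hcomm, hx, map_smul]
  obtain ⟨μ, hμ⟩ := Module.End.exists_eigenvalue ((A : H →ₗ[ℂ] H).restrict hinv)
  obtain ⟨v, hv⟩ := hμ.exists_hasEigenvector
  have hBv : β • (v : H) = 0 :=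
    ((mem_V v).1 v.2).symm.trans (hker v μ (congrArg Subtype.val hv.apply_eq_smul))
  exact hv.2 (Subtype.ext ((smul_eq_zero.1 hBv).resolve_left hβ0))

lemma orbitCovariance_apply_eq_zero (hA : ∀ x, ‖A x‖ = ‖x‖) {ψ x : H} {μ : ℂ}
    (h : A ψ = μ • ψ) (hx : inner ℂ ψ x = 0) (n : ℕ) : orbitCovariance A x n ψ = 0 := by
  simp [orbitCovariance_apply, inner_eq_zero_symm.1 (inner_iterate_eq_zero hA h hx _)]

lemma exists_tendsto_orbitCovariance_zero (hA : ∀ x, ‖A x‖ = ‖x‖) {K : Set H} (hK : IsCompact K)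
    {x : H} (hxK : ∀ n, A^[n] x ∈ K) (hx : ∀ ψ (μ : ℂ), A ψ = μ • ψ → inner ℂ ψ x = 0) :
    ∃ φ : ℕ → ℕ, StrictMono φ ∧ Tendsto (fun n ↦ orbitCovariance A x (φ n)) atTop (𝓝 0) := by
  have hK' := hK.image continuous_rankOne_self
  have hRK (n : ℕ) : rankOne ℂ (A^[n] x) (A^[n] x) ∈ (fun z ↦ rankOne ℂ z z) '' K :=
    ⟨_, hxK n, rfl⟩
  obtain ⟨φ, B, hφ, hlim⟩ := exists_strictMono_tendsto_birkhoffAverage hK'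
    (f := A) (g := fun z ↦ rankOne ℂ z z) hRK
  change Tendsto (fun n ↦ orbitCovariance A x (φ n)) atTop (𝓝 B) at hlim
  have hlim' : Tendsto (fun n ↦ orbitCovariance A (A x) (φ n)) atTop (𝓝 B) := by
    have h := tendsto_birkhoffAverage_apply_sub_birkhoffAverage (f := A)
      (g := fun z : H ↦ rankOne ℂ z z) ℝ (hK'.isBounded.subset (Set.range_subset_iff.2 hRK))
    simpa [orbitCovariance] using (h.comp hφ.tendsto_atTop).add hlim
  have happ {T : ℕ → H →L[ℂ] H} (hT : Tendsto T atTop (𝓝 B)) (y : H) :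
      Tendsto (fun n ↦ T n y) atTop (𝓝 (B y)) :=
    (continuous_eval_const y).continuousAt.tendsto.comp hT
  suffices B = 0 from ⟨φ, hφ, this ▸ hlim⟩
  refine eq_zero_of_commute_of_apply_eigenvector (A := A) ?_ (fun u v ↦ ?_) (fun y ↦ ?_)
    fun ψ μ hψ ↦ ?_
  · exact isCompactOperator_of_tendsto hlim (.of_forall fun n ↦
      isCompactOperator_orbitCovariance x _)
  · exact tendsto_nhds_unique ((happ hlim u).inner tendsto_const_nhds)
      ((tendsto_const_nhds.inner (happ hlim v)).congr fun n ↦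
        (isSymmetric_orbitCovariance x (φ n) u v).symm)
  · exact tendsto_nhds_unique (((A.continuous.tendsto _).comp (happ hlim y)))
      ((happ hlim' (A y)).congr fun n ↦ (apply_orbitCovariance hA x (φ n) y).symm)
  · refine tendsto_nhds_unique (happ hlim ψ) ?_
    simp [orbitCovariance_apply_eq_zero hA hψ (hx ψ μ hψ)]

/-- The orbit stays close to a finite net, so by pigeonhole it correlates with one of its points. -/
lemma eq_zero_of_tendsto_orbitCovariance_zero (hA : ∀ x, ‖A x‖ = ‖x‖) {K : Set H}
    (hK : IsCompact K) {x : H} (hxK : ∀ n, A^[n] x ∈ K) {φ : ℕ → ℕ} (hφ : StrictMono φ)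
    (hlim : Tendsto (fun n ↦ orbitCovariance A x (φ n)) atTop (𝓝 0)) : x = 0 := by
  by_contra hx
  have hpos : 0 < ‖x‖ := norm_pos_iff.2 hx
  have hnorm (i : ℕ) : ‖A^[i] x‖ = ‖x‖ := by
    induction i with
    | zero => rfl
    | succ i ih => rw [iterate_succ_apply', hA, ih]
  obtain ⟨s, -, hs, hcover⟩ := hK.finite_cover_balls (half_pos hpos)
  lift s to Finset H using hs
  have hnet (i : ℕ) : (‖x‖ ^ 2 / 2) ^ 2 ≤ ∑ y ∈ s, ‖inner ℂ (A^[i] x) y‖ ^ 2 := by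
    obtain ⟨y, hy, hdist⟩ := Set.mem_iUnion₂.1 (hcover (hxK i))
    refine le_trans ?_ (Finset.single_le_sum (fun _ _ ↦ by positivity) hy)
    have hsub : ‖inner ℂ (A^[i] x) (A^[i] x - y)‖ ≤ ‖x‖ * (‖x‖ / 2) := by
      refine (norm_inner_le_norm _ _).trans ?_
      rw [hnorm]
      rw [Metric.mem_ball, dist_eq_norm] at hdist
      gcongr
    have hself : ‖inner ℂ (A^[i] x) (A^[i] x)‖ = ‖x‖ ^ 2 := by
      rw [inner_self_eq_norm_sq_to_K, hnorm]
      simp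
    have htri := norm_sub_norm_le (inner ℂ (A^[i] x) (A^[i] x)) (inner ℂ (A^[i] x) y)
    rw [← inner_sub_right, hself] at htri
    gcongr
    linarith
  have hsum : Tendsto (fun n ↦ ∑ y ∈ s, (inner ℂ y (orbitCovariance A x (φ n) y)).re) atTop
      (𝓝 0) := by
    have h (y : H) :
        Tendsto (fun n ↦ (inner ℂ y (orbitCovariance A x (φ n) y)).re) atTop (𝓝 0) := by
      have hre : Continuous fun T : H →L[ℂ] H ↦ (inner ℂ y (T y)).re := by fun_prop
      simpa [Function.comp_def] using (hre.tendsto 0).comp hlim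
    simpa using tendsto_finsetSum s fun y _ ↦ h y
  refine absurd (ge_of_tendsto hsum ?_) (not_le.2 (by positivity : 0 < (‖x‖ ^ 2 / 2) ^ 2))
  filter_upwards [eventually_gt_atTop 0] with n hn
  have hn' : (0 : ℝ) < φ n := by exact_mod_cast hn.trans_le (hφ.le_apply)
  simp only [re_inner_orbitCovariance]
  rw [← Finset.mul_sum, Finset.sum_comm, ← div_eq_inv_mul, le_div_iff₀ hn', mul_comm]
  simpa using Finset.card_nsmul_le_sum (Finset.range (φ n)) _ _ fun i _ ↦ hnet i

/-- `e` is cyclic for the pair `A`, `A*`, phrased by duality: no nonzero subspace reducing `A` is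
orthogonal to `e`. -/
def IsStarCyclic (A : H →L[ℂ] H) (e : H) : Prop :=
  ∀ W : Submodule ℂ H, (∀ x ∈ W, A x ∈ W) → (∀ x ∈ W, adjoint A x ∈ W) →
    (∀ x ∈ W, inner ℂ e x = 0) → W = ⊥

lemma starProjection_apply_comm {W : Submodule ℂ H} [W.HasOrthogonalProjection]
    (hW : ∀ x ∈ W, A x ∈ W) (hW' : ∀ x ∈ W, adjoint A x ∈ W) (x : H) :
    W.starProjection (A x) = A (W.starProjection x) := by
  refine Submodule.eq_starProjection_of_mem_orthogonal (hW _ (W.starProjection_apply_mem x)) ?_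
  rw [← map_sub, Submodule.mem_orthogonal]
  intro w hw
  rw [← ContinuousLinearMap.adjoint_inner_left]
  exact (Submodule.mem_orthogonal _ _).1 (W.sub_starProjection_mem_orthogonal x) _ (hW' w hw)

theorem topologicalClosure_span_eigenvectors_eq_top (hA : ∀ x, ‖A x‖ = ‖x‖) {e : H}
    (he : IsStarCyclic A e) {K : Set H} (hK : IsCompact K) (heK : ∀ n, (A ^ n) e ∈ K) :
    (Submodule.span ℂ {ψ : H | ψ ≠ 0 ∧ ∃ μ : ℂ, A ψ = μ • ψ}).topologicalClosure = ⊤ := by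
  rw [Submodule.topologicalClosure_eq_top_iff]
  set S := {ψ : H | ψ ≠ 0 ∧ ∃ μ : ℂ, A ψ = μ • ψ}
  set W := (Submodule.span ℂ S)ᗮ
  have mem_W (w : H) : w ∈ W ↔ ∀ ψ ∈ S, inner ℂ ψ w = 0 := mem_orthogonal_span
  have hWA : ∀ w ∈ W, A w ∈ W := fun w hw ↦ by
    rw [mem_W] at hw ⊢
    rintro ψ ⟨hψ, μ, h⟩
    exact inner_iterate_eq_zero hA h (hw ψ ⟨hψ, μ, h⟩) 1
  have hWA' : ∀ w ∈ W, adjoint A w ∈ W := fun w hw ↦ by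
    rw [mem_W] at hw ⊢
    rintro ψ ⟨hψ, μ, h⟩
    rw [ContinuousLinearMap.adjoint_inner_right, h, inner_smul_left, hw ψ ⟨hψ, μ, h⟩, mul_zero]
  have horbit (n : ℕ) : A^[n] (W.starProjection e) = W.starProjection ((A ^ n) e) := by
    induction n with
    | zero => rfl
    | succ n ih =>
      rw [iterate_succ_apply', ih, ← starProjection_apply_comm hWA hWA', pow_succ',
        mul_apply_eq_comp]
  have hproj : W.starProjection e = 0 := by
    have hxK (n : ℕ) : A^[n] (W.starProjection e) ∈ W.starProjection '' K :=
      horbit n ▸ Set.mem_image_of_mem _ (heK n)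
    have hperp : ∀ ψ (μ : ℂ), A ψ = μ • ψ → inner ℂ ψ (W.starProjection e) = 0 := fun ψ μ h ↦ by
      rcases eq_or_ne ψ 0 with rfl | hψ
      · exact inner_zero_left _
      · exact (mem_W _).1 (W.starProjection_apply_mem e) ψ ⟨hψ, μ, h⟩
    have hK' := hK.image W.starProjection.continuous
    obtain ⟨φ, hφ, hlim⟩ := exists_tendsto_orbitCovariance_zero hA hK' hxK hperp
    exact eq_zero_of_tendsto_orbitCovariance_zero hA hK' hxK hφ hlim
  refine he W hWA hWA' fun w hw ↦ ?_
  rw [← Submodule.starProjection_eq_self_iff.2 hw, ← Submodule.inner_starProjection_left_eq_right,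
    hproj, inner_zero_left]

lemma IsStarCyclic.eq_zero_of_apply_eq_smul {e : H} (he : IsStarCyclic A e)
    (hA : ∀ x, ‖A x‖ = ‖x‖) {μ : ℂ} (hμ : μ ≠ 0) {x : H} (hx : A x = μ • x)
    (hex : inner ℂ e x = 0) : x = 0 := by
  refine (Submodule.span_singleton_eq_bot (R := ℂ)).1 (he (ℂ ∙ x) ?_ ?_ ?_) <;>
    simp only [Submodule.mem_span_singleton] <;> rintro _ ⟨c, rfl⟩
  · exact ⟨c * μ, by rw [map_smul, hx, smul_smul]⟩
  · exact ⟨c * μ⁻¹, by rw [map_smul, adjoint_apply_eq_inv_smul hA hμ hx, smul_smul]⟩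
  · rw [inner_smul_right, hex, mul_zero]

lemma exists_tendsto_average_eigenvector (hA : ∀ x, ‖A x‖ = ‖x‖) {μ : ℂ} (hμ : ‖μ‖ = 1) (e : H) :
    ∃ p, A p = μ • p ∧ (∀ ψ, A ψ = μ • ψ → inner ℂ ψ p = inner ℂ ψ e) ∧
      Tendsto (fun N : ℕ ↦ (N : ℂ)⁻¹ • ∑ i ∈ Finset.range N, μ⁻¹ ^ i • (A ^ i) e) atTop (𝓝 p) := by
  have hμ0 : μ ≠ 0 := norm_ne_zero_iff.1 (hμ ▸ one_ne_zero)
  have hnorm : ‖μ⁻¹ • A‖ ≤ 1 :=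
    ContinuousLinearMap.opNorm_le_bound _ zero_le_one fun x ↦ by simp [norm_smul, hμ, hA]
  have hlim := ContinuousLinearMap.tendsto_birkhoffAverage_orthogonalProjection (μ⁻¹ • A) hnorm e
  set E := (μ⁻¹ • A).eqLocus (1 : H →L[ℂ] H)
  have mem_E (x : H) : x ∈ E ↔ A x = μ • x := by
    rw [LinearMap.mem_eqLocus, ← inv_smul_eq_iff₀ hμ0]
    rfl
  refine ⟨E.starProjection e, (mem_E _).1 (E.starProjection_apply_mem e), fun ψ hψ ↦ ?_, ?_⟩
  · rw [← Submodule.inner_starProjection_left_eq_right,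
      Submodule.starProjection_eq_self_iff.2 ((mem_E ψ).2 hψ)]
  · refine hlim.congr fun N ↦ ?_
    simp only [birkhoffAverage, birkhoffSum, id, ← FunLike.coe_pow_eq_iterate, smul_pow,
      smul_apply]

/-- The eigenspace is spanned by the limit of the averages of `μ⁻ⁱ Aⁱ e` (von Neumann), so any
functional bound along the orbit of `e` passes to the eigenvector. -/
theorem IsStarCyclic.exists_norm_apply_eigenvector_le {e : H} (he : IsStarCyclic A e)
    (hA : ∀ x, ‖A x‖ = ‖x‖) {ψ : H} (hψ : ψ ≠ 0) {μ : ℂ} (h : A ψ = μ • ψ) :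
    ∃ c > 0, ∀ (f : H →L[ℂ] ℂ) (M : ℝ), (∀ n, ‖f ((A ^ n) e)‖ ≤ M) → ‖f ψ‖ ≤ c * M := by
  have hμ := norm_eq_one_of_apply_eq_smul hA hψ h
  have hμ0 : μ ≠ 0 := norm_ne_zero_iff.1 (hμ ▸ one_ne_zero)
  obtain ⟨p, hp, hpe, hlim⟩ := exists_tendsto_average_eigenvector hA hμ e
  have heψ : inner ℂ e ψ ≠ 0 := fun h0 ↦ hψ (he.eq_zero_of_apply_eq_smul hA hμ0 h h0)
  have hep : inner ℂ e p ≠ 0 := fun h0 ↦ by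
    have hp0 := he.eq_zero_of_apply_eq_smul hA hμ0 hp h0
    have := hpe ψ h
    rw [hp0, inner_zero_right] at this
    exact heψ (inner_eq_zero_symm.1 this.symm)
  have hψp : ψ = (inner ℂ e ψ / inner ℂ e p) • p := by
    refine sub_eq_zero.1 (he.eq_zero_of_apply_eq_smul hA hμ0 ?_ ?_)
    · rw [map_sub, map_smul, h, hp, smul_sub, smul_comm]
    · rw [inner_sub_right, inner_smul_right, div_mul_cancel₀ _ hep, sub_self]
  refine ⟨‖inner ℂ e ψ / inner ℂ e p‖, norm_pos_iff.2 (div_ne_zero heψ hep), fun f M hM ↦ ?_⟩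
  have hfp : ‖f p‖ ≤ M := by
    refine le_of_tendsto ((f.continuous.tendsto p).comp hlim).norm ?_
    filter_upwards [eventually_gt_atTop 0] with N hN
    have hN' : (0 : ℝ) < N := Nat.cast_pos.2 hN
    rw [comp_apply, map_smul, norm_smul, norm_inv, norm_natCast, map_sum, inv_mul_le_iff₀ hN']
    have hterm (i : ℕ) : ‖f (μ⁻¹ ^ i • (A ^ i) e)‖ ≤ M := by simpa [norm_smul, hμ] using hM i
    simpa using norm_sum_le_of_le (Finset.range N) fun i _ ↦ hterm i
  calc ‖f ψ‖ = ‖inner ℂ e ψ / inner ℂ e p‖ * ‖f p‖ := by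
        rw [← norm_smul, ← map_smul, ← hψp]
    _ ≤ ‖inner ℂ e ψ / inner ℂ e p‖ * M := by gcongr

end PointSpectrum

section Localization

lemma enorm_sq_eq_tsum (x : Hn) : ‖x‖ₑ ^ 2 = ∑' n, ‖x n‖ₑ ^ 2 := by
  have h := lp.hasSum_norm (p := 2) (by norm_num) x
  simp only [ENNReal.toReal_ofNat, Real.rpow_ofNat] at h
  simp only [← ofReal_norm, ← ENNReal.ofReal_pow (norm_nonneg _)]
  rw [← h.tsum_eq, ENNReal.ofReal_tsum_of_nonneg (fun _ ↦ by positivity) h.summable]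

lemma tsum_two_mul_add (f : ℕ → ℝ≥0∞) : ∑' k, (f (2 * k) + f (2 * k + 1)) = ∑' n, f n := by
  rw [ENNReal.tsum_add, tsum_even_add_odd ENNReal.summable ENNReal.summable]

variable {t r : ℝ}

lemma enorm_sq_rotation (hrt : r ^ 2 + t ^ 2 = 1) (a b : ℂ) :
    ‖r * a + t * b‖ₑ ^ 2 + ‖-t * a + r * b‖ₑ ^ 2 = ‖a‖ₑ ^ 2 + ‖b‖ₑ ^ 2 := by
  have h : ‖r * a + t * b‖ ^ 2 + ‖-t * a + r * b‖ ^ 2 = ‖a‖ ^ 2 + ‖b‖ ^ 2 := by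
    simp only [← normSq_eq_norm_sq, normSq_apply, add_re, add_im, mul_re, mul_im, neg_re, neg_im,
      ofReal_re, ofReal_im]
    linear_combination (a.re ^ 2 + a.im ^ 2 + b.re ^ 2 + b.im ^ 2) * hrt
  simp only [← ofReal_norm, ← ENNReal.ofReal_pow (norm_nonneg _)]
  rw [← ENNReal.ofReal_add (by positivity) (by positivity), h,
    ENNReal.ofReal_add (by positivity) (by positivity)]

lemma tsum_enorm_sq_row (hrt : r ^ 2 + t ^ 2 = 1) (x : ℕ → ℂ) :
    ∑' k, (‖rowEven t r x k‖ₑ ^ 2 + ‖rowOdd t r x k‖ₑ ^ 2) = ∑' n, ‖x n‖ₑ ^ 2 := by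
  have hrot (k : ℕ) : ‖rowEven t r x (k + 1)‖ₑ ^ 2 + ‖rowOdd t r x k‖ₑ ^ 2 =
      ‖x (2 * k + 1)‖ₑ ^ 2 + ‖x (2 * k + 1 + 1)‖ₑ ^ 2 := by
    have h := enorm_sq_rotation (add_comm (r ^ 2) _ ▸ hrt) (x (2 * k + 1)) (x (2 * k + 1 + 1))
    rwa [neg_mul, neg_add_eq_sub, ← enorm_neg (_ - _), neg_sub] at h
  rw [ENNReal.tsum_add, tsum_eq_zero_add' ENNReal.summable, add_assoc, ← ENNReal.tsum_add,
    tsum_congr hrot, tsum_two_mul_add fun n ↦ ‖x (n + 1)‖ₑ ^ 2, rowEven, enorm_neg,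
    ← tsum_eq_zero_add' (f := fun n ↦ ‖x n‖ₑ ^ 2) ENNReal.summable]

variable {θ : ℕ → Torus} {A : Hn →L[ℂ] Hn}

lemma IsPhasedSpent.norm_apply (hA : IsPhasedSpent t r θ A) (hrt : r ^ 2 + t ^ 2 = 1) (x : Hn) :
    ‖A x‖ = ‖x‖ := by
  have hrow (n : ℕ) : ‖A x n‖ₑ = ‖∑ j ∈ Finset.range (n + 3), Spent t r n j * x j‖ₑ := by
    rw [hA.apply, enorm_mul, ← ofReal_norm, norm_ec, ENNReal.ofReal_one, one_mul]
  have h : ‖A x‖ₑ ^ 2 = ‖x‖ₑ ^ 2 := by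
    rw [enorm_sq_eq_tsum, enorm_sq_eq_tsum, ← tsum_two_mul_add, ← tsum_enorm_sq_row hrt]
    simp only [hrow, sum_range_Spent_two_mul, sum_range_Spent_two_mul_add_one,
      enorm_sq_rotation hrt]
  rw [← toReal_enorm, ← toReal_enorm, (ENNReal.pow_right_strictMono two_ne_zero).injective h]

lemma Spent_two_mul_right_of_add_two_le {n k : ℕ} (h : 2 * k + 2 ≤ n) :
    Spent t r n (2 * k) = 0 := by
  unfold Spent; split_ifs <;> first | rfl | omega

lemma Spent_two_mul_add_one_two_mul_ne_zero (ht : t ≠ 0) (hr : r ≠ 0) (k : ℕ) :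
    Spent t r (2 * k + 1) (2 * k) ≠ 0 := by
  rcases k with _ | k
  · simpa [Spent] using ht
  · simpa [Spent, show (2 * (k + 1) + 1) % 2 ≠ 0 by omega] using And.intro hr ht

lemma IsPhasedSpent.apply_en_two_mul (hA : IsPhasedSpent t r θ A) (k : ℕ) :
    A (en (2 * k)) =
      ∑ n ∈ Finset.range (2 * k + 2), (ec (-θ n) * Spent t r n (2 * k)) • en n := by
  refine (hasSum_smul_en _).unique ?_
  simp only [← inner_en, hA _ _]
  refine hasSum_sum_of_ne_finset_zero fun n hn ↦ ?_
  rw [Spent_two_mul_right_of_add_two_le (by simpa using hn), mul_zero, zero_smul]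

lemma IsPhasedSpent.apply_two_mul_add_one_eq_zero (hA : IsPhasedSpent t r θ A) (ht : t ≠ 0)
    (hr : r ≠ 0) {x : Hn} {k : ℕ} (hx : ∀ j ≤ 2 * k, x j = 0)
    (hAx : ContinuousLinearMap.adjoint A x (2 * k) = 0) : x (2 * k + 1) = 0 := by
  rw [← inner_en, ContinuousLinearMap.adjoint_inner_right, hA.apply_en_two_mul, sum_inner,
    Finset.sum_range_succ, Finset.sum_eq_zero, zero_add, inner_smul_left, inner_en] at hAx
  · exact (mul_eq_zero.1 hAx).resolve_left ((map_ne_zero _).2 (mul_ne_zero (ec_ne_zero _)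
      (Spent_two_mul_add_one_two_mul_ne_zero ht hr k)))
  · intro n hn
    rw [inner_smul_left, inner_en, hx n (by simpa [Nat.lt_succ_iff] using hn), mul_zero]

lemma IsPhasedSpent.apply_two_mul_add_two_eq_zero (hA : IsPhasedSpent t r θ A) (ht : t ≠ 0)
    {x : Hn} {k : ℕ} (hx : ∀ j ≤ 2 * k + 1, x j = 0) (hAx : A x (2 * k) = 0) :
    x (2 * k + 2) = 0 := by
  have hrow : rowEven t r x k = 0 := by
    rcases k with _ | k
    · simp [rowEven, hx 0 (by omega)]
    · simp [rowEven, hx (2 * k + 1) (by omega), hx (2 * k + 2) (by omega)]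
  rw [hA.apply, sum_range_Spent_two_mul, hrow, rowOdd, hx _ le_rfl] at hAx
  simpa [ec_ne_zero, ht] using hAx

lemma IsPhasedSpent.isStarCyclic (hA : IsPhasedSpent t r θ A) (ht : t ≠ 0) (hr : r ≠ 0) :
    IsStarCyclic A (en 0) := by
  intro W hW hW' h0
  have hvanish (k : ℕ) : ∀ x ∈ W, ∀ j ≤ 2 * k, x j = 0 := by
    induction k with
    | zero =>
      rintro x hx j hj
      rw [Nat.le_zero.1 hj, ← inner_en, h0 x hx]
    | succ k ih =>
      intro x hx
      have hodd : ∀ j ≤ 2 * k + 1, x j = 0 := fun j hj ↦ by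
        rcases Nat.le_succ_iff.1 hj with hj | rfl
        · exact ih x hx j hj
        · exact hA.apply_two_mul_add_one_eq_zero ht hr (ih x hx) (ih _ (hW' x hx) _ le_rfl)
      intro j hj
      rcases Nat.le_succ_iff.1 hj with hj | rfl
      · exact hodd j hj
      · exact hA.apply_two_mul_add_two_eq_zero ht hodd (ih _ (hW x hx) _ le_rfl)
  refine (Submodule.eq_bot_iff W).2 fun x hx ↦ ?_
  ext j
  exact hvanish j x hx j (by omega)

lemma exists_isCompact_of_norm_apply_le {a : ℕ → ℝ} (ha : Summable a) (ha0 : ∀ n, 0 < a n) :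
    ∃ K : Set Hn, IsCompact K ∧ ∀ x : Hn, (∀ n, ‖x n‖ ≤ a n) → x ∈ K := by
  let F (c : ℕ → Metric.closedBall (0 : ℂ) 1) : Hn := ∑' n, (a n * c n : ℂ) • en n
  have hF : Continuous F := by
    refine continuous_tsum (fun n ↦ by fun_prop) ha fun n c ↦ ?_
    rw [norm_smul, norm_en, mul_one, norm_mul, norm_real, Real.norm_of_nonneg (ha0 n).le]
    exact mul_le_of_le_one_right (ha0 n).le (mem_closedBall_zero_iff.1 (c n).2)
  refine ⟨Set.range F, isCompact_range hF, fun x hx ↦ ⟨fun n ↦ ⟨x n / a n, ?_⟩, ?_⟩⟩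
  · rw [mem_closedBall_zero_iff, norm_div, norm_real, Real.norm_of_nonneg (ha0 n).le]
    exact div_le_one_of_le₀ (hx n) (ha0 n).le
  · refine (tsum_congr fun n ↦ ?_).trans (hasSum_smul_en x).tsum_eq
    rw [mul_div_cancel₀ _ (ofReal_ne_zero.2 (ha0 n).ne')]

lemma exists_forall_le_mul_pow_of_eventually {ι : Type*} {f : ι → ℕ → ℝ} {B C ρ : ℝ} (hB : 0 ≤ B)
    (hC : 0 < C) (hρ0 : 0 < ρ) (hρ1 : ρ ≤ 1) (hfB : ∀ i n, f i n ≤ B)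
    (hf : ∀ᶠ n in atTop, ∀ i, f i n ≤ C * ρ ^ n) :
    ∃ D > 0, ∀ i n, f i n ≤ D * ρ ^ n := by
  obtain ⟨N, hN⟩ := eventually_atTop.1 hf
  refine ⟨C + B * (ρ ^ N)⁻¹, by positivity, fun i n ↦ ?_⟩
  rw [add_mul]
  rcases le_total N n with hn | hn
  · exact (hN n hn i).trans (le_add_of_nonneg_right (by positivity))
  · refine (hfB i n).trans (le_trans ?_ (le_add_of_nonneg_left (by positivity)))
    rw [mul_assoc, ← div_eq_inv_mul]
    exact le_mul_of_one_le_right hB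
      ((one_le_div (by positivity)).2 (pow_le_pow_of_le_one hρ0.le hρ1 hn))

lemma IsPhasedSpent.exists_norm_pow_apply_le (hA : IsPhasedSpent t r θ A) (ht : t ≠ 0)
    (hrt : r ^ 2 + t ^ 2 = 1) {C ρ : ℝ} (hC : 0 < C) (hρ0 : 0 < ρ) (hρ1 : ρ < 1)
    (hdecay : ∀ᶠ n in atTop, decayBound t r n θ ≤ .ofReal (C * ρ ^ n)) :
    ∃ D > 0, ∀ T n, ‖(A ^ T) (en 0) n‖ ≤ D * ρ ^ n := by
  refine exists_forall_le_mul_pow_of_eventually zero_le_one hC hρ0 hρ1.le (fun T n ↦ ?_)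
    (hdecay.mono fun n hn T ↦ ?_)
  · refine (lp.norm_apply_le_norm two_ne_zero _ n).trans_eq ?_
    induction T with
    | zero => exact norm_en 0
    | succ T ih => rw [pow_succ', mul_apply_eq_comp, hA.norm_apply hrt, ih]
  · exact (ENNReal.ofReal_le_ofReal_iff (by positivity)).1
      ((hA.norm_pow_apply_le_decayBound ht hrt T n).trans hn)

lemma pow_eq_exp {ρ : ℝ} (hρ : 0 < ρ) (k : ℕ) :
    ρ ^ k = Real.exp (-(-Real.log ρ) * k) := by
  rw [neg_neg, mul_comm, Real.exp_nat_mul, Real.exp_log hρ]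

lemma IsPhasedSpent.exists_norm_eigenvector_le_exp (hA : IsPhasedSpent t r θ A) (ht : t ≠ 0)
    (hr : r ≠ 0) (hrt : r ^ 2 + t ^ 2 = 1) {D ρ : ℝ} (hD : 0 < D) (hρ0 : 0 < ρ) (hρ1 : ρ < 1)
    (horbit : ∀ T n, ‖(A ^ T) (en 0) n‖ ≤ D * ρ ^ n) {ψ : Hn} (hψ : ψ ≠ 0)
    (heig : ∃ μ : ℂ, A ψ = μ • ψ) :
    ∃ C > 0, ∃ lam > 0, ∀ k : ℕ, ‖inner ℂ (en k) ψ‖ ≤ C * Real.exp (-lam * k) := by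
  obtain ⟨μ, hμ⟩ := heig
  obtain ⟨c, hc, hle⟩ :=
    (hA.isStarCyclic ht hr).exists_norm_apply_eigenvector_le (hA.norm_apply hrt) hψ hμ
  refine ⟨c * D, by positivity, -Real.log ρ, neg_pos.2 (Real.log_neg hρ0 hρ1), fun k ↦ ?_⟩
  rw [← pow_eq_exp hρ0, mul_assoc]
  refine hle (innerSL ℂ (en k)) _ fun n ↦ ?_
  rw [innerSL_apply_apply, inner_en]
  exact horbit n k

lemma eq_iidLaw {ν : Measure Torus} [IsProbabilityMeasure ν] {ℙ : Measure (ℕ → Torus)}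
    (hiid : ∀ (s : Finset ℕ) (A : ℕ → Set Torus), (∀ k, MeasurableSet (A k)) →
      ℙ {ω | ∀ k ∈ s, ω k ∈ A k} = ∏ k ∈ s, ν (A k)) : ℙ = iidLaw ν :=
  Measure.eq_infinitePi _ fun s A hA ↦ hiid s A hA

theorem localization_N_general (t r : ℝ) (ht : t ≠ 0) (hr : r ≠ 0) (hrt : r ^ 2 + t ^ 2 = 1)
    (ν : Measure Torus) [IsProbabilityMeasure ν]
    (hac : (volume : Measure Torus).withDensity (ν.rnDeriv volume) ≠ 0)
    (ℙ : Measure (ℕ → Torus))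
    (hiid : ∀ (s : Finset ℕ) (A : ℕ → Set Torus), (∀ k, MeasurableSet (A k)) →
      ℙ {ω | ∀ k ∈ s, ω k ∈ A k} = ∏ k ∈ s, ν (A k))
    (U : (ℕ → Torus) → (Hn →L[ℂ] Hn)) (hU : ∀ ω, IsPhasedSpent t r ω (U ω)) :
    ∀ᵐ ω ∂ℙ,
      (Submodule.span ℂ {ψ : Hn | ψ ≠ 0 ∧ ∃ μ : ℂ, U ω ψ = μ • ψ}).topologicalClosure = ⊤ ∧
      ∀ ψ : Hn, ψ ≠ 0 → (∃ μ : ℂ, U ω ψ = μ • ψ) →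
        ∃ C > (0 : ℝ), ∃ lam > (0 : ℝ), ∀ k : ℕ,
          ‖inner ℂ (en k) ψ‖ ≤ C * Real.exp (-lam * k) := by
  rw [eq_iidLaw hiid]
  filter_upwards [ae_exists_eventually_decayBound_le_pow ht hr hrt hac] with ω hω
  obtain ⟨C, ρ, hC, hρ0, hρ1, hdecay⟩ := hω
  obtain ⟨D, hD, horbit⟩ := (hU ω).exists_norm_pow_apply_le ht hrt hC hρ0 hρ1 hdecay
  obtain ⟨K, hK, hmem⟩ := exists_isCompact_of_norm_apply_le
    ((summable_geometric_of_lt_one hρ0.le hρ1).mul_left D) fun n ↦ by positivity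
  exact ⟨topologicalClosure_span_eigenvectors_eq_top ((hU ω).norm_apply hrt)
      ((hU ω).isStarCyclic ht hr) hK fun T ↦ hmem _ (horbit T),
    fun ψ hψ heig ↦ (hU ω).exists_norm_eigenvector_le_exp ht hr hrt hD hρ0 hρ1 horbit hψ heig⟩

end Localization

/-- Localization for the random unitary operators `U⁺_ω = D⁺_ω S⁺` on `ℓ²(ℕ₀)`:
for `ℙ⁺`-a.e. `ω`, `U⁺_ω` has pure point spectrum with exponentially decaying eigenfunctions. -/
theorem localization_N
    (t r : ℝ) (ht0 : 0 < t) (ht1 : t < 1) (hr0 : 0 < r) (hr1 : r < 1)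
    (hrt : r^2 + t^2 = 1)
    (ν : Measure Torus) [IsProbabilityMeasure ν]
    (hac : (volume : Measure Torus).withDensity (ν.rnDeriv volume) ≠ 0)
    (hsupp : (interior (measSupport ν)).Nonempty)
    (ℙ : Measure (ℕ → Torus)) [IsProbabilityMeasure ℙ]
    (hiid : ∀ (s : Finset ℕ) (A : ℕ → Set Torus), (∀ k, MeasurableSet (A k)) →
      ℙ {ω | ∀ k ∈ s, ω k ∈ A k} = ∏ k ∈ s, ν (A k))
    (U : (ℕ → Torus) → (Hn →L[ℂ] Hn))
    (hU : ∀ (ω : ℕ → Torus) (k j : ℕ),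
      inner (𝕜 := ℂ) (en k) (U ω (en j)) = ec (-(ω k)) * Spent t r k j) :
    ∀ᵐ ω ∂ℙ,
      (Submodule.span ℂ {ψ : Hn | ψ ≠ 0 ∧ ∃ μ : ℂ, U ω ψ = μ • ψ}).topologicalClosure = ⊤ ∧
      ∀ ψ : Hn, ψ ≠ 0 → (∃ μ : ℂ, U ω ψ = μ • ψ) →
        ∃ C > (0:ℝ), ∃ lam > (0:ℝ), ∀ k : ℕ,
          ‖inner (𝕜 := ℂ) (en k) ψ‖ ≤ C * Real.exp (-lam * (k:ℝ)) := by
  exact localization_N_general t r ht0.ne' hr0.ne' hrt ν hac ℙ hiid U hU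

end
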